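/- arXiv:1404.1980 — 3 statements merged into one kernel-verified Lean document; each statement's English description precedes it below -/
import Mathlib

section
/- (Amitsur–Levitzki theorem) For any 2n complex n×n matrices X_1, …, X_{2n}, the alternating sum Σ_{σ ∈ S_{2n}} sgn(σ) · X_{σ(1)} X_{σ(2)} ⋯ X_{σ(2n)} equals the zero matrix, where the product is the ordered matrix product. -/
open Matrix

namespace Matrix

section TraceNilpotent

variable {ι R : Type*} [Fintype ι] [DecidableEq ι] [CommRing R]

open Polynomial in
/-- The derivative of the characteristic polynomial is the trace of the adjugate of the
characteristic matrix. -/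
theorem derivative_charpoly_eq_trace_adjugate (M : Matrix ι ι R) :
    derivative M.charpoly = (adjugate M.charmatrix).trace := by
  have key : ∀ i, adjugate M.charmatrix i i =
      det (M.charmatrix.updateCol i (Pi.single i 1)) := fun i => by
    have h : adjugate M.charmatrix i i = adjugate M.charmatrixᵀ i i :=
      congrFun₂ (adjugate_transpose M.charmatrix) i i
    rw [h, adjugate_apply, updateRow_transpose, det_transpose]
  simp only [trace, diag_apply, key, charpoly, det_apply, map_sum, derivative_smul,
    Units.smul_def, derivative_prod_finset]
  rw [Finset.sum_comm]
  refine Finset.sum_congr rfl fun σ _ => ?_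
  rw [Finset.smul_sum]
  refine Finset.sum_congr rfl fun i _ => ?_
  rw [← Finset.prod_erase_mul _ _ (Finset.mem_univ i)]
  congr 2
  · refine Finset.prod_congr rfl fun j hj => ?_
    rw [updateCol_ne (Finset.ne_of_mem_erase hj)]
  · rw [updateCol_self]
    by_cases h : σ i = i <;> simp [h]

open Polynomial in
theorem pow_card_eq_zero_of_trace_pow_eq_zero (K : Type*) [Field K] [CharZero K]
    [Algebra K R] (M : Matrix ι ι R)
    (h : ∀ k, 1 ≤ k → k ≤ Fintype.card ι → (M ^ k).trace = 0) :
    M ^ Fintype.card ι = 0 := by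
  nontriviality R
  have cancel : ∀ (a : ℤ) (x : R), a ≠ 0 → (a : R) * x = 0 → x = 0 := fun a x ha hx => by
    have hu : IsUnit (algebraMap K R a) := (IsUnit.mk0 (a : K) (by exact_mod_cast ha)).map _
    rw [map_intCast] at hu
    exact hu.mul_right_eq_zero.mp hx
  set p := M.charpoly with hp
  set N := matPolyEquiv (adjugate M.charmatrix) with hN
  have hNM : N * (X - C M) = matPolyEquiv (p • (1 : Matrix ι ι R[X])) := by
    rw [← matPolyEquiv_charmatrix, hN, ← map_mul, adjugate_mul, hp, charpoly]
  have coeff_p : ∀ k, (matPolyEquiv (p • (1 : Matrix ι ι R[X]))).coeff k = p.coeff k • 1 := by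
    intro k
    ext i j
    rw [matPolyEquiv_coeff_apply]
    by_cases hij : i = j <;> simp [hij]
  have hrec : ∀ k, N.coeff k = N.coeff (k + 1) * M + p.coeff (k + 1) • 1 := fun k => by
    rw [← coeff_p, ← hNM, mul_sub, coeff_sub, coeff_mul_X, coeff_mul_C]; abel
  have hzero : p.coeff 0 • (1 : Matrix ι ι R) = -(N.coeff 0 * M) := by
    rw [← coeff_p, ← hNM, mul_sub, coeff_sub, coeff_mul_C]; simp
  have htrace : ∀ k, (N.coeff k).trace = (k + 1 : R) * p.coeff (k + 1) := fun k => by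
    have := congrArg (coeff · k) (derivative_charpoly_eq_trace_adjugate M)
    simp only [coeff_derivative, trace, finsetSum_coeff, diag_apply] at this
    simp only [trace, diag_apply, hN, matPolyEquiv_coeff_apply]
    rw [← this]; ring
  have htop : ∀ m k, Fintype.card ι ≤ k → N.natDegree < k + m → N.coeff k = 0 := by
    intro m
    induction m with
    | zero => intro k _ hk; exact coeff_eq_zero_of_natDegree_lt hk
    | succ m ih =>
      intro k hk hm
      rw [hrec, ih (k + 1) (by lia) (by lia), coeff_eq_zero_of_natDegree_lt (p := p)]
      · simp
      · rw [hp, charpoly_natDegree_eq_dim]; lia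
  have hpow : ∀ j k, k + j + 1 = Fintype.card ι → N.coeff k = M ^ j := by
    intro j
    induction j with
    | zero =>
      intro k hk
      have : p.coeff (k + 1) = 1 := by
        have := charpoly_monic M
        rw [Monic, leadingCoeff, charpoly_natDegree_eq_dim] at this
        rw [show k + 1 = Fintype.card ι by lia]; exact this
      rw [hrec, htop (N.natDegree + 1) (k + 1) (by lia) (by lia), this]
      simp
    | succ j ih =>
      intro k hk
      have h1 := hrec k
      rw [ih (k + 1) (by lia), ← pow_succ] at h1
      have h2 := congrArg trace h1
      rw [htrace, trace_add, h _ (by lia) (by lia), trace_smul, trace_one, ← hk] at h2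
      have h3 : p.coeff (k + 1) = 0 := by
        refine cancel (-(j + 1)) _ (by lia) ?_
        push_cast at h2 ⊢
        simp only [smul_eq_mul] at h2
        linear_combination h2
      rw [h1, h3, zero_smul, add_zero]
  rcases Nat.eq_zero_or_pos (Fintype.card ι) with hc | hc
  · have := Fintype.card_eq_zero_iff.mp hc
    exact Subsingleton.elim _ _
  · obtain ⟨m, hm⟩ := Nat.exists_eq_add_of_lt hc
    rw [hpow m 0 (by lia), ← pow_succ, show m + 1 = Fintype.card ι by lia] at hzero
    have h2 := congrArg trace hzero
    rw [trace_neg, h _ hc le_rfl, trace_smul, trace_one, neg_zero, smul_eq_mul, mul_comm] at h2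
    have h3 : p.coeff 0 = 0 := cancel (Fintype.card ι) _ (by lia) (by exact_mod_cast h2)
    rw [h3, zero_smul] at hzero
    exact neg_eq_zero.mp hzero.symm

end TraceNilpotent

section ExteriorAlgebra

variable {ι K V : Type*} [Fintype ι] [Field K] [AddCommGroup V] [Module K V]

theorem _root_.ExteriorAlgebra.ι_mul_ι_mem_center (x y : V) :
    ExteriorAlgebra.ι K x * ExteriorAlgebra.ι K y ∈
      Subalgebra.center K (ExteriorAlgebra K V) := by
  rw [Subalgebra.mem_center_iff]
  intro b
  change Commute b _
  induction b using ExteriorAlgebra.induction with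
  | algebraMap r => exact Algebra.commutes r _
  | ι z =>
    have hx := eq_neg_of_add_eq_zero_left (ExteriorAlgebra.ι_add_mul_swap (R := K) z x)
    have hy := eq_neg_of_add_eq_zero_left (ExteriorAlgebra.ι_add_mul_swap (R := K) z y)
    rw [Commute, SemiconjBy, ← mul_assoc, hx, neg_mul, mul_assoc, hy, mul_neg, neg_neg, mul_assoc]
  | mul a b ha hb => exact ha.mul_left hb
  | add a b ha hb => exact ha.add_left hb

theorem trace_map_ι_mul_mul (v : Matrix ι ι V) (C : Matrix ι ι (ExteriorAlgebra K V))
    (hC : ∀ i j, C i j ∈ Subalgebra.center K (ExteriorAlgebra K V)) :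
    (v.map (ExteriorAlgebra.ι K) * v.map (ExteriorAlgebra.ι K) * C).trace =
      -(v.map (ExteriorAlgebra.ι K) * C * v.map (ExteriorAlgebra.ι K)).trace := by
  simp only [trace, diag_apply, mul_apply, map_apply, Finset.sum_mul, ← Finset.sum_neg_distrib]
  rw [Finset.sum_congr rfl fun _ _ => Finset.sum_comm, Finset.sum_comm]
  refine Finset.sum_congr rfl fun s _ => Finset.sum_congr rfl fun r _ =>
    Finset.sum_congr rfl fun t _ => ?_
  rw [eq_neg_of_add_eq_zero_left (ExteriorAlgebra.ι_add_mul_swap (v r s) (v s t)), neg_mul,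
    mul_assoc, mul_assoc, Subalgebra.mem_center_iff.mp (hC t r)]

theorem map_ι_pow_two_mul_card_eq_zero [DecidableEq ι] [CharZero K] (v : Matrix ι ι V) :
    v.map (ExteriorAlgebra.ι K) ^ (2 * Fintype.card ι) = 0 := by
  set A := v.map (ExteriorAlgebra.ι K) with hA
  let Z := Subalgebra.center K (ExteriorAlgebra K V)
  let F : Matrix ι ι Z →+* Matrix ι ι (ExteriorAlgebra K V) := Z.val.toRingHom.mapMatrix
  obtain ⟨B, hB⟩ : ∃ B : Matrix ι ι Z, F B = A ^ 2 := by
    refine ⟨of fun r c => ⟨(A ^ 2) r c, ?_⟩, by ext; rfl⟩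
    rw [pow_two, mul_apply]
    exact Subalgebra.sum_mem _ fun _ _ => ExteriorAlgebra.ι_mul_ι_mem_center _ _
  rw [pow_mul, ← hB, ← map_pow, pow_card_eq_zero_of_trace_pow_eq_zero K, map_zero]
  intro k hk _
  obtain ⟨m, rfl⟩ := Nat.exists_eq_add_of_le' hk
  have hval : ∀ D : Matrix ι ι Z, (D.trace : ExteriorAlgebra K V) = (F D).trace := fun D => by
    simp [trace, F]
  have hneg := trace_map_ι_mul_mul v (F (B ^ m)) fun i j => ((B ^ m) i j).2
  rw [← hA, map_pow, hB, mul_assoc A ((A ^ 2) ^ m), ← pow_mul, ← pow_succ, ← pow_succ', ← pow_two,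
    ← pow_add] at hneg
  apply Subtype.ext
  rw [hval, map_pow, hB, ← pow_mul]
  rw [show 2 + 2 * m = 2 * (m + 1) by ring, show 2 * m + 1 + 1 = 2 * (m + 1) by ring] at hneg
  have : Module ℚ (ExteriorAlgebra K V) := Module.compHom _ (algebraMap ℚ K)
  have : IsAddTorsionFree (ExteriorAlgebra K V) := .of_module_rat _
  exact self_eq_neg.mp hneg

end ExteriorAlgebra

section StandardPolynomial

variable {ι K : Type*} [Fintype ι] [DecidableEq ι] [Field K]

theorem prod_ofFn_map_smul {E : Type*} [Ring E] [Algebra K E] {m : ℕ}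
    (X : Fin m → Matrix ι ι K) (e : Fin m → E) :
    (List.ofFn fun t => (X t).map (· • e t)).prod =
      (List.ofFn X).prod.map (· • (List.ofFn e).prod) := by
  induction m with
  | zero => ext i j; by_cases h : i = j <;> simp [h]
  | succ m ih =>
    simp only [List.ofFn_succ, List.prod_cons, ih]
    ext i j
    simp [mul_apply, Finset.sum_smul, smul_smul, mul_comm]

theorem sum_det_single_smul {N : Type*} [AddCommGroup N] [Module K N] {m : ℕ}
    (g : (Fin m → Fin m) → N) :
    ∑ f : Fin m → Fin m, det (of fun t => (Pi.single (f t) 1 : Fin m → K)) • g f =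
      ∑ σ : Equiv.Perm (Fin m), (Equiv.Perm.sign σ : ℤ) • g σ := by
  symm
  refine Finset.sum_of_injOn (fun σ => ⇑σ) DFunLike.coe_injective.injOn (by simp) ?_ ?_
  · intro f _ hf
    have hinj : ¬ Function.Injective f := fun hinj =>
      hf ⟨Equiv.ofBijective f hinj.bijective_of_finite, by simp, rfl⟩
    obtain ⟨a, b, hab, hne⟩ := Function.not_injective_iff.mp hinj
    rw [det_zero_of_row_eq hne (by ext; simp [hab]), zero_smul]
  · intro σ _
    have : of (fun t => (Pi.single (σ t) 1 : Fin m → K)) = Equiv.Perm.permMatrix K σ := by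
      ext i j
      simp [Equiv.Perm.permMatrix, PEquiv.toMatrix_apply, Pi.single_apply, eq_comm]
    rw [this, det_permutation, Int.cast_smul_eq_zsmul]

theorem sum_sign_smul_prod_eq_zero [CharZero K] {m : ℕ} (hm : m = 2 * Fintype.card ι)
    (X : Fin m → Matrix ι ι K) :
    ∑ σ : Equiv.Perm (Fin m),
      (Equiv.Perm.sign σ : ℤ) • (List.ofFn fun t => X (σ t)).prod = 0 := by
  let e : Fin m → ExteriorAlgebra K (Fin m → K) := fun i => ExteriorAlgebra.ι K (Pi.single i 1)
  let v : Matrix ι ι (Fin m → K) := of fun r c i => X i r c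
  have hv : v.map (ExteriorAlgebra.ι K) = ∑ i, (X i).map (· • e i) := by
    ext r c
    rw [map_apply, sum_apply, pi_eq_sum_univ' (v r c), map_sum]
    simp [e, v]
  have hpow : ∑ f : Fin m → Fin m, (List.ofFn fun t => X (f t)).prod.map
      (· • (List.ofFn fun t => e (f t)).prod) = 0 := by
    have h := map_ι_pow_two_mul_card_eq_zero (K := K) v
    rw [← hm, hv, ← List.prod_replicate, ← List.ofFn_const,
      ← MultilinearMap.mkPiAlgebraFin_apply (R := K), MultilinearMap.map_sum] at h
    simpa only [MultilinearMap.mkPiAlgebraFin_apply, prod_ofFn_map_smul] using h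
  let φ : ExteriorAlgebra K (Fin m → K) →ₗ[K] K :=
    ExteriorAlgebra.liftAlternating (Function.update 0 m detRowAlternating)
  have hφ : ∀ f : Fin m → Fin m, φ (List.ofFn fun t => e (f t)).prod =
      det (of fun t => (Pi.single (f t) 1 : Fin m → K)) := fun f => by
    simp only [φ, e, ← ExteriorAlgebra.ιMulti_apply,
      ExteriorAlgebra.liftAlternating_apply_ιMulti, Function.update_self]
    rfl
  rw [← sum_det_single_smul (K := K) fun f => (List.ofFn fun t => X (f t)).prod]
  ext r c
  have h := congrArg φ (congrFun₂ hpow r c)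
  simpa [sum_apply, hφ, mul_comm] using h

end StandardPolynomial

end Matrix

theorem amitsur_levitzki (n : ℕ) (hn : 0 < n)
    (X : Fin (2 * n) → Matrix (Fin n) (Fin n) ℂ) :
    ∑ σ : Equiv.Perm (Fin (2 * n)),
      (Equiv.Perm.sign σ : ℤ) • (List.ofFn fun t => X (σ t)).prod = 0 :=
  Matrix.sum_sign_smul_prod_eq_zero (by rw [Fintype.card_fin]) X
end

section
/- (Kostant–Rowen theorem) Let n ≥ 2. For any 2n−2 complex alternating n×n matrices A_1, …, A_{2n−2} (i.e. A_iᵀ = −A_i for each i), the alternating sum Σ_{σ ∈ S_{2n−2}} sgn(σ) · A_{σ(1)} A_{σ(2)} ⋯ A_{σ(2n−2)} equals the zero matrix, where the product is the ordered matrix product. -/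
open Matrix

section CommutativeAlgebra

open Polynomial

variable {Z : Type*} [CommRing Z] {n : Type*} [Fintype n] [DecidableEq n]

theorem trace_adjugate_charmatrix (B : Matrix n n Z) :
    trace (adjugate (charmatrix B)) = derivative B.charpoly := by
  have h (i : n) : adjugate (charmatrix B) i i =
      ∑ σ : Equiv.Perm n, (Equiv.Perm.sign σ : ℤ) •
        ((∏ j ∈ Finset.univ.erase i, charmatrix B j (σ j)) *
          derivative (charmatrix B i (σ i))) := by
    rw [adjugate_apply, ← det_transpose, ← updateCol_transpose, det_apply]
    refine Finset.sum_congr rfl fun σ _ => ?_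
    rw [← Finset.prod_erase_mul _ _ (Finset.mem_univ i), Units.smul_def]
    congr 2
    · refine Finset.prod_congr rfl fun j hj => ?_
      rw [updateCol_ne (Finset.ne_of_mem_erase hj), transpose_apply]
    · rw [updateCol_self, charmatrix_apply, diagonal_apply]
      by_cases hσ : i = σ i
      · simp [← hσ]
      · simp [hσ, Ne.symm hσ]
  rw [charpoly, ← det_transpose]
  simp only [trace, diag_apply, h, det_apply, transpose_apply, derivative_sum, Units.smul_def,
    derivative_smul]
  rw [Finset.sum_comm]
  refine Finset.sum_congr rfl fun σ _ => ?_
  rw [← Finset.smul_sum, derivative_prod_finset]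

/-- If all power traces vanish, the Faddeev-LeVerrier recursion collapses. -/
theorem pow_card_sub_one_of_trace_pow_eq_zero [IsAddTorsionFree Z] (B : Matrix n n Z)
    (h : ∀ k, 0 < k → trace (B ^ k) = 0) :
    B ^ (Fintype.card n - 1) = adjugate (-B) := by
  rcases subsingleton_or_nontrivial Z with _ | _
  · exact Subsingleton.elim _ _
  rcases isEmpty_or_nonempty n with _ | _
  · exact Subsingleton.elim _ _
  set N := Fintype.card n with hN
  have hNpos : 0 < N := Fintype.card_pos
  set P : (Matrix n n Z)[X] := matPolyEquiv (adjugate (charmatrix B)) with hP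
  have hmul : P * (X - C B) = B.charpoly.map (algebraMap Z (Matrix n n Z)) := by
    rw [← matPolyEquiv_charmatrix, hP, ← map_mul, adjugate_mul, ← matPolyEquiv_smul_one]
    rfl
  have hcoeff (k : ℕ) : P.coeff k - P.coeff (k + 1) * B =
      algebraMap Z (Matrix n n Z) (B.charpoly.coeff (k + 1)) := by
    rw [← coeff_map, ← hmul, mul_sub, coeff_sub, coeff_mul_X, coeff_mul_C]
  have htr (k : ℕ) : trace (P.coeff k) = B.charpoly.coeff (k + 1) * (k + 1) := by
    rw [← coeff_derivative, ← trace_adjugate_charmatrix]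
    simp only [trace, diag_apply, finsetSum_coeff, hP, matPolyEquiv_coeff_apply]
  have hdeg : P.natDegree < N := by
    by_cases hP0 : P = 0
    · simpa [hP0] using hNpos
    have h1 := natDegree_mul' (p := P) (q := X - C B) (by
      rw [(monic_X_sub_C B).leadingCoeff, mul_one]
      exact leadingCoeff_ne_zero.2 hP0)
    rw [hmul, natDegree_X_sub_C] at h1
    have h2 : (B.charpoly.map (algebraMap Z (Matrix n n Z))).natDegree ≤ N :=
      natDegree_map_le.trans (charpoly_natDegree_eq_dim B).le
    omega
  have key : ∀ j, j < N → P.coeff (N - 1 - j) = B ^ j := by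
    intro j
    induction j with
    | zero =>
      intro _
      have h1 := hcoeff (N - 1)
      rw [Nat.sub_add_cancel hNpos, coeff_eq_zero_of_natDegree_lt hdeg, zero_mul, sub_zero] at h1
      have h2 : B.charpoly.coeff N = 1 := by
        have := B.charpoly_monic.coeff_natDegree
        rwa [charpoly_natDegree_eq_dim] at this
      rw [Nat.sub_zero, h1, h2, map_one, pow_zero]
    | succ j ih =>
      intro hj
      have h1 := hcoeff (N - 1 - (j + 1))
      have e : N - 1 - (j + 1) + 1 = N - 1 - j := by omega
      rw [e, ih (by omega), ← pow_succ] at h1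
      have h2 := congrArg trace h1
      rw [trace_sub, h _ j.succ_pos, sub_zero, htr, e, Algebra.algebraMap_eq_smul_one,
        trace_smul, trace_one, smul_eq_mul, ← hN] at h2
      have e' : (N : Z) = ((N - 1 - (j + 1) : ℕ) : Z) + 1 + ((j + 1 : ℕ) : Z) := by
        rw [← Nat.cast_succ, ← Nat.cast_add]; congr 1; omega
      have h3 : (j + 1) • B.charpoly.coeff (N - 1 - j) = 0 := by
        rw [nsmul_eq_mul]
        rw [e'] at h2
        linear_combination h2.symm
      have h4 := (nsmul_eq_zero_iff_right (Nat.succ_ne_zero j)).mp h3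
      rw [h4, map_zero, sub_eq_zero] at h1
      exact h1
  have hlast := key (N - 1) (by omega)
  rw [Nat.sub_self] at hlast
  rw [← hlast]
  have hneg : (charmatrix B).map (Polynomial.evalRingHom 0) = -B := by
    ext i j
    by_cases hij : i = j <;> simp [hij]
  have := RingHom.map_adjugate (Polynomial.evalRingHom (0 : Z)) (charmatrix B)
  rw [RingHom.mapMatrix_apply, RingHom.mapMatrix_apply, hneg] at this
  rw [← this]
  ext i j
  rw [hP, matPolyEquiv_coeff_apply, map_apply, coe_evalRingHom, coeff_zero_eq_eval_zero]

theorem add_pow_succ_of_sq_eq_zero {x : Z} (y : Z) (hx : x * x = 0) (k : ℕ) :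
    (x + y) ^ (k + 1) = y ^ (k + 1) + (k + 1) * x * y ^ k := by
  induction k with
  | zero => simp [add_comm]
  | succ k ih =>
    rw [pow_succ, ih]
    push_cast
    linear_combination ((k : Z) + 1) * y ^ k * hx

omit [Fintype n] in
theorem sum_pow_card_of_sq_eq_zero (x : n → Z) (hx : ∀ i, x i * x i = 0) (s : Finset n) :
    (∑ i ∈ s, x i) ^ s.card = (s.card.factorial : Z) * ∏ i ∈ s, x i := by
  induction s using Finset.induction_on with
  | empty => simp
  | insert a s ha ih =>
    have h0 : (∑ i ∈ s, x i) ^ (s.card + 1) = 0 := by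
      rw [pow_succ, ih, mul_assoc, Finset.mul_sum, Finset.sum_eq_zero, mul_zero]
      intro i hi
      rw [← Finset.mul_prod_erase _ _ hi]
      linear_combination (∏ j ∈ s.erase i, x j) * hx i
    rw [Finset.sum_insert ha, Finset.prod_insert ha, Finset.card_insert_of_notMem ha,
      add_pow_succ_of_sq_eq_zero _ (hx a), h0, ih, Nat.factorial_succ]
    push_cast
    ring

/-- The determinant as a Berezin-type product: here `E k l` plays the role of `f k * g l` for
two families `f`, `g` of odd variables. -/
theorem prod_sum_eq_det_mul [IsAddTorsionFree Z] (E : Matrix n n Z)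
    (hE : ∀ k l k' l', E k l * E k' l' = -(E k l' * E k' l)) (C : Matrix n n Z) :
    ∏ k, ∑ l, C k l * E k l = C.det * ∏ k, E k k := by
  let H : (n → Z) [⋀^n]→ₗ[Z] Z :=
    { (MultilinearMap.mkPiAlgebra Z n Z).compLinearMap
        (fun k => Fintype.linearCombination Z (E k)) with
      map_eq_zero_of_eq' := by
        intro v i j hv hij
        have h0 : (∑ l, v j l * E i l) * (∑ l, v j l * E j l) = 0 := by
          refine self_eq_neg.mp ?_
          rw [Finset.sum_mul_sum]
          conv_lhs => rw [Finset.sum_comm]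
          rw [← Finset.sum_neg_distrib]
          refine Finset.sum_congr rfl fun a _ => ?_
          rw [← Finset.sum_neg_distrib]
          refine Finset.sum_congr rfl fun b _ => ?_
          linear_combination v j a * v j b * hE i b j a
        simp only [MultilinearMap.toFun_eq_coe, MultilinearMap.compLinearMap_apply,
          MultilinearMap.mkPiAlgebra_apply, Fintype.linearCombination_apply, smul_eq_mul]
        rw [← Finset.mul_prod_erase _ _ (Finset.mem_univ i),
          ← Finset.mul_prod_erase _ _ (Finset.mem_erase.2 ⟨hij.symm, Finset.mem_univ j⟩), hv,
          ← mul_assoc, h0, zero_mul] }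
  have hH (v : n → n → Z) : H v = ∏ k, ∑ l, v k l * E k l := rfl
  have h1 := congrArg (fun f => f C) (H.eq_smul_basis_det (Pi.basisFun Z n))
  have h2 : ((H (Pi.basisFun Z n)) • (Pi.basisFun Z n).det) C = H (Pi.basisFun Z n) * C.det :=
    congrArg (H (Pi.basisFun Z n) * ·) (Pi.basisFun_det_apply C)
  rw [show (∏ k, ∑ l, C k l * E k l) = _ from h1.trans h2, mul_comm, hH]
  simp [Pi.single_apply]

theorem adjugate_mul_of_sum_pow_mem [IsAddTorsionFree Z] (I : Ideal Z) (E B : Matrix n n Z)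
    (hE : ∀ k l k' l', E k l * E k' l' = -(E k l' * E k' l))
    (hI : ∀ z : Z, ∀ k : ℕ, k ≠ 0 → (k : Z) * z ∈ I → z ∈ I)
    (h : (∑ k, ∑ l, B k l * E k l) ^ (Fintype.card n - 1) ∈ I) (i j : n) :
    adjugate B i j * ∏ k, E k k ∈ I := by
  set x : n → Z := fun k => ∑ l, B k l * E k l with hxdef
  have hEx (k l : n) : E k l * x k = 0 := by
    rw [hxdef, Finset.mul_sum]
    refine Finset.sum_eq_zero fun l' _ => ?_
    have h1 : E k l * E k l' = 0 := by
      have := hE k l k l'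
      refine self_eq_neg.mp ?_
      rw [this]; linear_combination -this
    linear_combination B k l' * h1
  have hxx (k : n) : x k * x k = 0 := by
    conv_lhs => arg 1; rw [hxdef]
    rw [Finset.sum_mul]
    exact Finset.sum_eq_zero fun l _ => by rw [mul_assoc, hEx, mul_zero]
  have hdrop (m : ℕ) (y : Z) : E j i * (x j + y) ^ m = E j i * y ^ m := by
    induction m with
    | zero => simp
    | succ m ih =>
      rw [pow_succ', pow_succ']
      linear_combination (x j + y) ^ m * hEx j i + y * ih
  have hmain := I.mul_mem_left (E j i) h
  rw [← Finset.add_sum_erase _ _ (Finset.mem_univ j), hdrop] at hmain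
  have hc : (Finset.univ.erase j).card = Fintype.card n - 1 := by
    rw [Finset.card_erase_of_mem (Finset.mem_univ j), Finset.card_univ]
  rw [← hc, sum_pow_card_of_sq_eq_zero x hxx] at hmain
  have h2 := prod_sum_eq_det_mul E hE (B.updateRow j (Pi.single i 1))
  rw [← adjugate_apply] at h2
  rw [← h2, ← Finset.mul_prod_erase _ _ (Finset.mem_univ j)]
  refine hI _ _ (Nat.factorial_ne_zero (Finset.univ.erase j).card) ?_
  convert hmain using 1
  have h3 : ∑ l, (B.updateRow j (Pi.single i 1)) j l * E j l = E j i := by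
    simp [Pi.single_apply]
  have h4 : ∏ k ∈ Finset.univ.erase j, ∑ l, (B.updateRow j (Pi.single i 1)) k l * E k l =
      ∏ k ∈ Finset.univ.erase j, x k := by
    refine Finset.prod_congr rfl fun k hk => ?_
    rw [updateRow_ne (Finset.ne_of_mem_erase hk)]
  rw [h3, h4]
  ring

/-- A skew-symmetric square-zero matrix has unipotent exponential of determinant one. -/
theorem det_one_add_two_smul_of_skew (t : Matrix n n Z) (ht : tᵀ = -t) (htt : t * t = 0) :
    det (1 + (2 : ℕ) • t) = 1 := by
  have h1 : (1 + t) * (1 + t) = 1 + (2 : ℕ) • t := by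
    simp only [mul_add, add_mul, mul_one, one_mul, htt]; abel
  have h2 : (1 + t) * (1 + t)ᵀ = 1 := by
    simp [ht, mul_add, add_mul, htt]
  have h3 := congrArg det h2
  rw [det_mul, det_transpose, det_one] at h3
  rw [← h1, det_mul, h3]

end CommutativeAlgebra

section OddElements

/-- A submodule of odd elements: squares vanish and products of two elements are scalars from the
commutative ring `Z` of even elements. -/
structure IsOddSubmodule {Z Λ : Type*} [CommRing Z] [Ring Λ] [Algebra Z Λ]
    (V : Submodule Z Λ) : Prop where
  mul_self : ∀ v ∈ V, v * v = 0
  mul_mem : ∀ u ∈ V, ∀ v ∈ V, ∃ z : Z, algebraMap Z Λ z = u * v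
  injective : Function.Injective (algebraMap Z Λ)

/-- The expression `∑ i j, C i j * (f i * f j)`. -/
def quadSum {Λ ι : Type*} [Ring Λ] [Fintype ι] (C : Matrix ι ι Λ) (f : ι → Λ) : Λ :=
  ∑ i, ∑ j, C i j * (f i * f j)

variable {Z Λ : Type*} [CommRing Z] [Ring Λ] [Algebra Z Λ] {V : Submodule Z Λ}
  {ι : Type*} [Fintype ι]

theorem quadSum_add (C D : Matrix ι ι Λ) (f : ι → Λ) :
    quadSum (C + D) f = quadSum C f + quadSum D f := by
  simp [quadSum, add_mul, Finset.sum_add_distrib]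

theorem quadSum_subst (C : Matrix ι ι Λ) (T : Matrix ι ι Z) (f : ι → Λ) :
    quadSum C (fun i => ∑ j, T i j • f j) =
      quadSum (Tᵀ.map (algebraMap Z Λ) * C * T.map (algebraMap Z Λ)) f := by
  simp only [quadSum, mul_apply, Finset.sum_mul, Finset.mul_sum, map_apply, transpose_apply]
  have h1 (i j k l : ι) : C i j * (T i k • f k * T j l • f l) =
      algebraMap Z Λ (T i k) * C i j * algebraMap Z Λ (T j l) * (f k * f l) := by
    rw [mul_assoc (algebraMap Z Λ (T i k) * C i j), ← Algebra.smul_def, ← Algebra.smul_def]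
    simp only [smul_mul_assoc, mul_smul_comm]
  simp only [h1]
  calc _ = ∑ i, ∑ k, ∑ j, ∑ l, algebraMap Z Λ (T i k) * C i j * algebraMap Z Λ (T j l) *
            (f k * f l) := by
        refine Finset.sum_congr rfl fun i _ => Eq.trans ?_ Finset.sum_comm
        refine Finset.sum_congr rfl fun j _ => ?_
        exact Finset.sum_comm
    _ = _ := by
        rw [Finset.sum_comm]
        refine Finset.sum_congr rfl fun k _ => ?_
        calc _ = ∑ i, ∑ l, ∑ j, algebraMap Z Λ (T i k) * C i j * algebraMap Z Λ (T j l) *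
                  (f k * f l) := Finset.sum_congr rfl fun i _ => Finset.sum_comm
          _ = _ := by
              rw [Finset.sum_comm]
              exact Finset.sum_congr rfl fun l _ => Finset.sum_comm

namespace IsOddSubmodule

theorem mul_comm_neg (hV : IsOddSubmodule V) {u v : Λ} (hu : u ∈ V) (hv : v ∈ V) :
    u * v = -(v * u) := by
  have h := hV.mul_self (u + v) (V.add_mem hu hv)
  rw [mul_add, add_mul, add_mul, hV.mul_self u hu, hV.mul_self v hv, zero_add, add_zero] at h
  rw [add_comm] at h
  exact eq_neg_of_add_eq_zero_left h

theorem exists_map_eq (hV : IsOddSubmodule V) {X Y : Matrix ι ι Λ} (hX : ∀ i j, X i j ∈ V)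
    (hY : ∀ i j, Y i j ∈ V) : ∃ B : Matrix ι ι Z, B.map (algebraMap Z Λ) = X * Y := by
  have h (i j : ι) : ∃ z : Z, algebraMap Z Λ z = (X * Y) i j := by
    choose z hz using fun k => hV.mul_mem (X i k) (hX i k) (Y k j) (hY k j)
    exact ⟨∑ k, z k, by rw [map_sum, mul_apply]; exact Finset.sum_congr rfl fun k _ => hz k⟩
  choose B hB using h
  exact ⟨Matrix.of B, by ext i j; exact hB i j⟩

omit [Fintype ι] in
theorem map_injective (hV : IsOddSubmodule V) {B C : Matrix ι ι Z}
    (h : B.map (algebraMap Z Λ) = C.map (algebraMap Z Λ)) : B = C :=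
  Matrix.map_injective hV.injective h

theorem map_mul_mem (C : Matrix ι ι Z) {X : Matrix ι ι Λ} (hX : ∀ i j, X i j ∈ V) (i j : ι) :
    (C.map (algebraMap Z Λ) * X) i j ∈ V := by
  rw [mul_apply]
  refine V.sum_mem fun k _ => ?_
  rw [map_apply, ← Algebra.smul_def]
  exact V.smul_mem _ (hX k j)

theorem trace_mul (hV : IsOddSubmodule V) {X Y : Matrix ι ι Λ} (hX : ∀ i j, X i j ∈ V)
    (hY : ∀ i j, Y i j ∈ V) : trace (X * Y) = -trace (Y * X) := by
  simp only [trace, diag_apply, mul_apply, ← Finset.sum_neg_distrib]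
  rw [Finset.sum_comm]
  exact Finset.sum_congr rfl fun i _ => Finset.sum_congr rfl fun j _ =>
    hV.mul_comm_neg (hX _ _) (hY _ _)

theorem transpose_mul (hV : IsOddSubmodule V) {X Y : Matrix ι ι Λ} (hX : ∀ i j, X i j ∈ V)
    (hY : ∀ i j, Y i j ∈ V) : (X * Y)ᵀ = -(Yᵀ * Xᵀ) := by
  ext i j
  rw [neg_apply, transpose_apply, mul_apply, mul_apply, ← Finset.sum_neg_distrib]
  exact Finset.sum_congr rfl fun k _ => hV.mul_comm_neg (hX _ _) (hY _ _)

theorem transpose_map_mul (C : Matrix ι ι Z) (X : Matrix ι ι Λ) :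
    (C.map (algebraMap Z Λ) * X)ᵀ = Xᵀ * Cᵀ.map (algebraMap Z Λ) := by
  ext i j
  simp only [transpose_apply, mul_apply, map_apply]
  exact Finset.sum_congr rfl fun k _ => Algebra.commutes _ _

variable [DecidableEq ι]

theorem map_pow (B : Matrix ι ι Z) (k : ℕ) :
    (B ^ k).map (algebraMap Z Λ) = B.map (algebraMap Z Λ) ^ k :=
  _root_.map_pow (algebraMap Z Λ).mapMatrix B k

variable {A : Matrix ι ι Λ} {B : Matrix ι ι Z}

theorem map_pow_eq (hB : B.map (algebraMap Z Λ) = A * A) (k : ℕ) :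
    (B ^ k).map (algebraMap Z Λ) = A ^ (2 * k) := by
  rw [map_pow, hB, pow_mul, pow_two]

theorem trace_pow_eq_zero [IsAddTorsionFree Z] (hV : IsOddSubmodule V) (hA : ∀ i j, A i j ∈ V)
    (hB : B.map (algebraMap Z Λ) = A * A) (k : ℕ) (hk : 0 < k) : trace (B ^ k) = 0 := by
  refine self_eq_neg.mp (hV.injective ?_)
  have h1 : algebraMap Z Λ (trace (B ^ k)) = trace (A ^ (2 * k)) := by
    rw [← map_pow_eq hB]
    exact AddMonoidHom.map_trace (algebraMap Z Λ).toAddMonoidHom _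
  rw [_root_.map_neg, h1]
  obtain ⟨k, rfl⟩ := Nat.exists_eq_succ_of_ne_zero hk.ne'
  have h2 : A ^ (2 * (k + 1)) = ((B ^ k).map (algebraMap Z Λ) * A) * A := by
    rw [map_pow_eq hB, mul_assoc, ← pow_two, ← pow_add]; rfl
  have h3 : A ^ (2 * (k + 1)) = A * ((B ^ k).map (algebraMap Z Λ) * A) := by
    rw [map_pow_eq hB, ← pow_succ, ← pow_succ']; rfl
  conv_lhs => rw [Nat.succ_eq_add_one, h2]
  conv_rhs => rw [Nat.succ_eq_add_one, h3]
  exact hV.trace_mul (map_mul_mem _ hA) hA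

omit [DecidableEq ι] in
theorem transpose_sq (hV : IsOddSubmodule V) (hA : ∀ i j, A i j ∈ V) (hskew : Aᵀ = -A)
    (hB : B.map (algebraMap Z Λ) = A * A) : Bᵀ = -B := by
  refine hV.map_injective ?_
  rw [transpose_map, hB, hV.transpose_mul hA hA, hskew, Matrix.map_neg _ (map_neg _), hB,
    neg_mul_neg]

theorem transpose_sq_pow (hV : IsOddSubmodule V) (hA : ∀ i j, A i j ∈ V) (hskew : Aᵀ = -A)
    (hB : B.map (algebraMap Z Λ) = A * A) (k : ℕ) : (B ^ k)ᵀ = (-1 : ℤ) ^ k • B ^ k := by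
  rw [transpose_pow, hV.transpose_sq hA hskew hB, neg_pow]
  rcases Nat.even_or_odd k with h | h <;> simp [h.neg_one_pow]

theorem transpose_pow_even (hV : IsOddSubmodule V) (hA : ∀ i j, A i j ∈ V) (hskew : Aᵀ = -A)
    (k : ℕ) : (A ^ (2 * k))ᵀ = (-1 : ℤ) ^ k • A ^ (2 * k) := by
  obtain ⟨B, hB⟩ := hV.exists_map_eq hA hA
  rw [← map_pow_eq hB, ← transpose_map, hV.transpose_sq_pow hA hskew hB]
  ext i j
  rw [map_apply, Matrix.smul_apply, Matrix.smul_apply, map_apply, map_zsmul]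

theorem transpose_pow_odd (hV : IsOddSubmodule V) (hA : ∀ i j, A i j ∈ V) (hskew : Aᵀ = -A)
    (k : ℕ) : (A ^ (2 * k + 1))ᵀ = (-1 : ℤ) ^ (k + 1) • A ^ (2 * k + 1) := by
  obtain ⟨B, hB⟩ := hV.exists_map_eq hA hA
  rw [pow_succ, ← map_pow_eq hB, transpose_map_mul, transpose_map, map_pow_eq hB,
    hV.transpose_pow_even hA hskew, hskew, mul_smul_comm, neg_mul, ← pow_succ', ← pow_succ,
    pow_succ (-1 : ℤ), mul_neg_one, neg_smul, smul_neg]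

theorem trace_pow_even [IsAddTorsionFree Z] (hV : IsOddSubmodule V) (hA : ∀ i j, A i j ∈ V)
    (k : ℕ) (hk : 0 < k) : trace (A ^ (2 * k)) = 0 := by
  obtain ⟨B, hB⟩ := hV.exists_map_eq hA hA
  rw [← map_pow_eq hB, ← map_zero (algebraMap Z Λ), ← hV.trace_pow_eq_zero hA hB k hk]
  exact (AddMonoidHom.map_trace (algebraMap Z Λ).toAddMonoidHom _).symm

theorem linearCombination_mem {κ : Type*} [Fintype κ] {f : κ → Λ} (hf : ∀ i, f i ∈ V)
    (c : κ → Z) : ∑ i, c i • f i ∈ V :=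
  V.sum_mem fun i _ => V.smul_mem _ (hf i)

/-- The algebra map from the exterior algebra determined by a family of odd elements. -/
noncomputable def substitution (hV : IsOddSubmodule V) {n : ℕ} (f : Fin n → Λ)
    (hf : ∀ i, f i ∈ V) : ExteriorAlgebra Z (Fin n → Z) →ₐ[Z] Λ :=
  ExteriorAlgebra.lift Z ⟨Fintype.linearCombination Z f, fun c => by
    rw [Fintype.linearCombination_apply]
    exact hV.mul_self _ (linearCombination_mem hf c)⟩

theorem substitution_ι (hV : IsOddSubmodule V) {n : ℕ} (f : Fin n → Λ)
    (hf : ∀ i, f i ∈ V) (c : Fin n → Z) :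
    hV.substitution f hf (ExteriorAlgebra.ι Z c) = ∑ i, c i • f i := by
  rw [substitution, ExteriorAlgebra.lift_ι_apply, Fintype.linearCombination_apply]

theorem substitution_ιMulti (hV : IsOddSubmodule V) {n : ℕ} (f : Fin n → Λ)
    (hf : ∀ i, f i ∈ V) (v : Fin n → Fin n → Z) :
    hV.substitution f hf (ExteriorAlgebra.ιMulti Z n v) =
      det (Matrix.of v) • (List.ofFn f).prod := by
  have h : (hV.substitution f hf).toLinearMap.compAlternatingMap (ExteriorAlgebra.ιMulti Z n) =
      (LinearMap.toSpanSingleton Z Λ (List.ofFn f).prod).compAlternatingMap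
        (Pi.basisFun Z (Fin n)).det := by
    refine (Pi.basisFun Z (Fin n)).ext_alternating fun s hs => ?_
    obtain ⟨σ, rfl⟩ : ∃ σ : Equiv.Perm (Fin n), ⇑σ = s :=
      ⟨Equiv.ofBijective s (Finite.injective_iff_bijective.1 hs), rfl⟩
    have e : (fun i => Pi.basisFun Z (Fin n) (σ i)) = ⇑(Pi.basisFun Z (Fin n)) ∘ σ := rfl
    rw [e, AlternatingMap.map_perm, AlternatingMap.map_perm]
    congr 1
    rw [LinearMap.compAlternatingMap_apply, LinearMap.compAlternatingMap_apply,
      Module.Basis.det_self, LinearMap.toSpanSingleton_apply, one_smul,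
      ExteriorAlgebra.ιMulti_apply, AlgHom.toLinearMap_apply, map_list_prod, List.map_ofFn]
    congr 2
    funext i
    simp [substitution_ι, Pi.single_apply]
  have h' := congrArg (fun g => g v) h
  rw [LinearMap.compAlternatingMap_apply, LinearMap.compAlternatingMap_apply,
    LinearMap.toSpanSingleton_apply, Pi.basisFun_det_apply] at h'
  exact h'

theorem substitution_eq_det_smul (hV : IsOddSubmodule V) {n : ℕ} (f : Fin n → Λ)
    (hf : ∀ i, f i ∈ V) (T : Matrix (Fin n) (Fin n) Z)
    {x : ExteriorAlgebra Z (Fin n → Z)} (hx : x ∈ ⋀[Z]^n (Fin n → Z)) :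
    hV.substitution (fun i => ∑ j, T i j • f j) (fun i => linearCombination_mem hf (T i)) x =
      T.det • hV.substitution f hf x := by
  rw [← ExteriorAlgebra.ιMulti_span_fixedDegree] at hx
  induction hx using Submodule.span_induction with
  | mem x hx =>
    obtain ⟨v, rfl⟩ := hx
    have h : hV.substitution (fun i => ∑ j, T i j • f j)
        (fun i => linearCombination_mem hf (T i)) (ExteriorAlgebra.ιMulti Z n v) =
        hV.substitution f hf (ExteriorAlgebra.ιMulti Z n fun i j => (Matrix.of v * T) i j) := by
      rw [ExteriorAlgebra.ιMulti_apply, ExteriorAlgebra.ιMulti_apply, map_list_prod,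
        map_list_prod, List.map_ofFn, List.map_ofFn]
      congr 2
      funext i
      simp only [Function.comp_apply, substitution_ι, mul_apply, Finset.smul_sum, Finset.sum_smul,
        smul_smul, Matrix.of_apply]
      exact Finset.sum_comm
    rw [h, substitution_ιMulti, substitution_ιMulti, smul_smul, mul_comm T.det, ← det_mul]
    rfl
  | zero => simp
  | add x y _ _ hx hy => rw [map_add, map_add, hx, hy, smul_add]
  | smul c x _ hx => rw [map_smul, map_smul, hx, smul_comm]

omit [DecidableEq ι] in
theorem exists_quadSum_eq (hV : IsOddSubmodule V) {B : Matrix ι ι Z} {C : Matrix ι ι Λ}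
    (hB : B.map (algebraMap Z Λ) = C) {f : ι → Λ} (hf : ∀ i, f i ∈ V) :
    ∃ w : Z, algebraMap Z Λ w = quadSum C f := by
  choose E hE using fun i j => hV.mul_mem (f i) (hf i) (f j) (hf j)
  refine ⟨∑ i, ∑ j, B i j * E i j, ?_⟩
  subst hB
  simp [quadSum, map_sum, hE]

omit [DecidableEq ι] in
theorem mul_smul_odd (hV : IsOddSubmodule V) (hA : ∀ i j, A i j ∈ V) {τ : Λ} (hτ : τ ∈ V)
    (X : Matrix ι ι Λ) : A * (τ • X) = -(τ • (A * X)) := by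
  ext i j
  rw [mul_apply, neg_apply, Matrix.smul_apply, mul_apply, Finset.smul_sum,
    ← Finset.sum_neg_distrib]
  refine Finset.sum_congr rfl fun k _ => ?_
  rw [Matrix.smul_apply, smul_eq_mul, smul_eq_mul, ← mul_assoc, hV.mul_comm_neg (hA i k) hτ,
    neg_mul, mul_assoc]

/-- The Pfaffian of the square of a skew-symmetric odd matrix of even size vanishes. -/
theorem mul_quadSum_pow_eq_zero [IsAddTorsionFree Λ] (hV : IsOddSubmodule V) {n m : ℕ}
    (hn : n = 2 * (m + 1)) {A : Matrix (Fin n) (Fin n) Λ} (hA : ∀ i j, A i j ∈ V)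
    (hskew : Aᵀ = -A) {τ : Λ} (hτ : τ ∈ V) {f : Fin n → Λ} (hf : ∀ i, f i ∈ V) :
    τ * quadSum (A * A) f ^ (m + 1) = 0 := by
  obtain ⟨B, hB⟩ := hV.exists_map_eq hA hA
  obtain ⟨t, ht⟩ : ∃ t : Matrix (Fin n) (Fin n) Z, t.map (algebraMap Z Λ) = τ • A := by
    choose t ht using fun i j => hV.mul_mem τ hτ (A i j) (hA i j)
    exact ⟨Matrix.of t, by ext i j; exact ht i j⟩
  have hmapmul (X Y : Matrix (Fin n) (Fin n) Z) : (X * Y).map (algebraMap Z Λ) =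
      X.map (algebraMap Z Λ) * Y.map (algebraMap Z Λ) := Matrix.map_mul
  have htt : t * t = 0 := by
    refine hV.map_injective ?_
    rw [hmapmul, ht, smul_mul, hV.mul_smul_odd hA hτ, smul_neg, smul_smul, hV.mul_self τ hτ,
      zero_smul, neg_zero, Matrix.map_zero _ (map_zero _)]
  have htB : t * B = B * t := by
    refine hV.map_injective ?_
    rw [hmapmul, hmapmul, ht, hB, smul_mul, mul_assoc, hV.mul_smul_odd hA hτ, mul_neg,
      hV.mul_smul_odd hA hτ, neg_neg]
  have htT : tᵀ = -t := by
    refine hV.map_injective ?_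
    rw [transpose_map, ht, transpose_smul, hskew, Matrix.map_neg _ (map_neg _), ht, smul_neg]
  set T : Matrix (Fin n) (Fin n) Z := 1 + (2 : ℕ) • t with hT
  have hdet : T.det = 1 := det_one_add_two_smul_of_skew t htT htt
  have hTT : Tᵀ = 1 - (2 : ℕ) • t := by
    rw [hT, transpose_add, transpose_one, transpose_smul, htT, smul_neg, sub_eq_add_neg]
  have hquadB : quadSum (A * A) (fun i => ∑ j, T i j • f j) = quadSum (A * A) f := by
    rw [quadSum_subst, ← hB, ← hmapmul, ← hmapmul, hTT, hT]
    congr 2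
    have h1 : (1 - (2 : ℕ) • t) * B = B * (1 - (2 : ℕ) • t) := by
      simp only [sub_mul, mul_sub, smul_mul_assoc, mul_smul_comm, htB, one_mul, mul_one]
    have h2 : (1 - (2 : ℕ) • t) * (1 + (2 : ℕ) • t) = 1 := by
      simp only [sub_mul, mul_add, smul_mul_assoc, mul_smul_comm, htt, one_mul, mul_one, smul_zero]
      abel
    rw [h1, mul_assoc, h2, mul_one]
  have hquadA : quadSum A (fun i => ∑ j, T i j • f j) =
      quadSum A f - (4 : ℕ) • (τ * quadSum (A * A) f) := by
    have hTm : T.map (algebraMap Z Λ) = 1 + (2 : ℕ) • (τ • A) := by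
      rw [← ht, hT]
      change (algebraMap Z Λ).mapMatrix _ = 1 + (2 : ℕ) • (algebraMap Z Λ).mapMatrix t
      rw [map_add, map_nsmul, _root_.map_one]
    have hTTm : Tᵀ.map (algebraMap Z Λ) = 1 - (2 : ℕ) • (τ • A) := by
      rw [← ht, hTT]
      change (algebraMap Z Λ).mapMatrix _ = 1 - (2 : ℕ) • (algebraMap Z Λ).mapMatrix t
      rw [map_sub, map_nsmul, _root_.map_one]
    have h3 : τ • A * A * (τ • A) = 0 := by
      rw [smul_mul, smul_mul, mul_assoc, hV.mul_smul_odd hA hτ, mul_neg,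
        hV.mul_smul_odd hA hτ, neg_neg, smul_smul, hV.mul_self τ hτ, zero_smul]
    have h4 : Tᵀ.map (algebraMap Z Λ) * A * T.map (algebraMap Z Λ) =
        A + (-((4 : ℕ) • (τ • (A * A)))) := by
      rw [hTm, hTTm]
      simp only [sub_mul, mul_add, smul_mul_assoc, mul_smul_comm, one_mul, mul_one,
        hV.mul_smul_odd hA hτ]
      have h5 : τ • (A * A * (τ • A)) = 0 := by
        rw [← smul_mul, ← smul_mul, h3]
      rw [h5]
      simp only [smul_zero]
      abel
    have h6 : quadSum (-((4 : ℕ) • (τ • (A * A)))) f =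
        -((4 : ℕ) • (τ * quadSum (A * A) f)) := by
      have h7 (i j : Fin n) : (-((4 : ℕ) • (τ • (A * A)))) i j =
          -((4 : ℕ) • (τ * (A * A) i j)) := rfl
      simp only [quadSum, h7, neg_mul, Finset.sum_neg_distrib, Finset.mul_sum, Finset.smul_sum,
        mul_assoc, smul_mul_assoc]
    rw [quadSum_subst, h4, quadSum_add, h6, sub_eq_add_neg]
  let e (i : Fin n) : ExteriorAlgebra Z (Fin n → Z) := ExteriorAlgebra.ι Z (Pi.single i 1)
  let Ω : ExteriorAlgebra Z (Fin n → Z) := ∑ i, ∑ j, B i j • (e i * e j)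
  have hsub (f : Fin n → Λ) (hf : ∀ i, f i ∈ V) (i : Fin n) :
      hV.substitution f hf (e i) = f i := by
    simp [e, substitution_ι, Pi.single_apply]
  have hsubΩ (f : Fin n → Λ) (hf : ∀ i, f i ∈ V) :
      hV.substitution f hf Ω = quadSum (A * A) f := by
    simp [Ω, quadSum, map_sum, hsub, ← hB, Algebra.smul_def]
  have he (i : Fin n) : e i ∈ LinearMap.range (ExteriorAlgebra.ι Z (M := Fin n → Z)) :=
    LinearMap.mem_range_self _ _
  have hee (i j : Fin n) : e i * e j ∈ ⋀[Z]^2 (Fin n → Z) := by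
    rw [ExteriorAlgebra.exteriorPower, pow_two]
    exact Submodule.mul_mem_mul (he i) (he j)
  have hΩ : Ω ∈ ⋀[Z]^2 (Fin n → Z) :=
    Submodule.sum_mem _ fun i _ => Submodule.sum_mem _ fun j _ => Submodule.smul_mem _ _ (hee i j)
  have hx (i j : Fin n) : Ω ^ m * (e i * e j) ∈ ⋀[Z]^n (Fin n → Z) := by
    have h : LinearMap.range (ExteriorAlgebra.ι Z (M := Fin n → Z)) ^ n =
        (LinearMap.range (ExteriorAlgebra.ι Z (M := Fin n → Z)) ^ 2) ^ m *
          LinearMap.range (ExteriorAlgebra.ι Z (M := Fin n → Z)) ^ 2 := by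
      rw [← pow_mul, ← pow_add]
      congr 1
    change _ ∈ _ ^ n
    rw [h]
    exact Submodule.mul_mem_mul (Submodule.pow_mem_pow _ hΩ m) (hee i j)
  obtain ⟨w, hw⟩ := hV.exists_quadSum_eq hB hf
  have hcomm (X : Λ) : X * quadSum (A * A) f ^ m = quadSum (A * A) f ^ m * X := by
    rw [← hw, ← _root_.map_pow]
    exact (Algebra.commutes _ _).symm
  have hG (f' : Fin n → Λ) (hf' : ∀ i, f' i ∈ V) (h : quadSum (A * A) f' = quadSum (A * A) f) :
      ∑ i, ∑ j, A i j * hV.substitution f' hf' (Ω ^ m * (e i * e j)) =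
        quadSum (A * A) f ^ m * quadSum A f' := by
    rw [show quadSum A f' = ∑ i, ∑ j, A i j * (f' i * f' j) from rfl, Finset.mul_sum]
    refine Finset.sum_congr rfl fun i _ => ?_
    rw [Finset.mul_sum]
    refine Finset.sum_congr rfl fun j _ => ?_
    rw [map_mul, map_mul, _root_.map_pow, hsub, hsub, hsubΩ, h, ← mul_assoc, hcomm, mul_assoc]
  have h1 := hG f hf rfl
  have h2 := hG _ (fun i => linearCombination_mem hf (T i)) hquadB
  simp only [hV.substitution_eq_det_smul f hf T (hx _ _), hdet, one_smul] at h2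
  rw [h1, hquadA, mul_sub, eq_comm, sub_eq_self, mul_smul_comm,
    nsmul_eq_zero_iff_right four_ne_zero, ← mul_assoc, ← hcomm, mul_assoc, ← pow_succ] at h2
  exact h2

theorem mul_prod_mul_pow_eq_zero [IsAddTorsionFree Λ] [IsAddTorsionFree Z]
    (hV : IsOddSubmodule V) {n m : ℕ} (hn : n = 2 * (m + 1)) {A : Matrix (Fin n) (Fin n) Λ}
    (hA : ∀ i j, A i j ∈ V) (hskew : Aᵀ = -A) {τ : Λ} (hτ : τ ∈ V) {f g : Fin n → Λ}
    (hf : ∀ i, f i ∈ V) (hg : ∀ i, g i ∈ V) (i j : Fin n) :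
    τ * (List.ofFn fun k => f k * g k).prod * (A ^ (2 * (n - 1))) i j = 0 := by
  obtain ⟨B, hB⟩ := hV.exists_map_eq hA hA
  choose E hE using fun k l => hV.mul_mem (f k) (hf k) (g l) (hg l)
  let I : Ideal Z := LinearMap.ker (LinearMap.toSpanSingleton Z Λ τ)
  have hI (z : Z) : z ∈ I ↔ z • τ = 0 := by
    rw [LinearMap.mem_ker, LinearMap.toSpanSingleton_apply]
  have hIn (z : Z) (k : ℕ) (hk : k ≠ 0) (hz : (k : Z) * z ∈ I) : z ∈ I := by
    rw [hI, ← nsmul_eq_mul, smul_assoc, nsmul_eq_zero_iff_right hk] at hz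
    rwa [hI]
  obtain ⟨u, hu⟩ := hV.exists_quadSum_eq hB (f := fun i => f i + g i)
    fun i => V.add_mem (hf i) (hg i)
  obtain ⟨v, hv⟩ := hV.exists_quadSum_eq hB (f := fun i => f i - g i)
    fun i => V.sub_mem (hf i) (hg i)
  have huI : u ^ (m + 1) ∈ I := by
    rw [hI, Algebra.smul_def, Algebra.commutes, _root_.map_pow, hu]
    exact hV.mul_quadSum_pow_eq_zero hn hA hskew hτ fun i => V.add_mem (hf i) (hg i)
  have hvI : v ^ (m + 1) ∈ I := by
    rw [hI, Algebra.smul_def, Algebra.commutes, _root_.map_pow, hv]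
    exact hV.mul_quadSum_pow_eq_zero hn hA hskew hτ fun i => V.sub_mem (hf i) (hg i)
  have hBT (i j : Fin n) : B j i = -B i j :=
    congrFun (congrFun (hV.transpose_sq hA hskew hB) i) j
  have h4 : (4 : Z) * ∑ k, ∑ l, B k l * E k l = u - v := by
    refine hV.injective ?_
    rw [map_sub, hu, hv, map_mul, map_sum]
    have hgf : ∑ k, ∑ l, algebraMap Z Λ (B k l) * (g k * f l) =
        ∑ k, ∑ l, algebraMap Z Λ (B k l) * (f k * g l) := by
      rw [Finset.sum_comm]
      refine Finset.sum_congr rfl fun k _ => Finset.sum_congr rfl fun l _ => ?_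
      rw [hBT, map_neg, hV.mul_comm_neg (hg l) (hf k), neg_mul_neg]
    have h5 : quadSum (A * A) (fun i => f i + g i) - quadSum (A * A) (fun i => f i - g i) =
        (2 : ℕ) • ∑ k, ∑ l, algebraMap Z Λ (B k l) * (f k * g l) +
        (2 : ℕ) • ∑ k, ∑ l, algebraMap Z Λ (B k l) * (g k * f l) := by
      simp only [quadSum, ← hB, map_apply, Finset.smul_sum, ← Finset.sum_add_distrib,
        ← Finset.sum_sub_distrib]
      refine Finset.sum_congr rfl fun k _ => Finset.sum_congr rfl fun l _ => ?_
      noncomm_ring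
    rw [h5, hgf, ← add_smul, nsmul_eq_mul]
    simp [map_sum, hE, map_ofNat]
  have hpow : (∑ k, ∑ l, B k l * E k l) ^ (Fintype.card (Fin n) - 1) ∈ I := by
    refine hIn _ (4 ^ (Fintype.card (Fin n) - 1)) (by positivity) ?_
    rw [Nat.cast_pow, Nat.cast_ofNat, ← mul_pow, h4, sub_eq_add_neg]
    refine Ideal.add_pow_mem_of_pow_mem_of_le I (m := m + 1) (n := m + 1) huI ?_ ?_
    · rw [neg_pow]
      exact I.mul_mem_left _ hvI
    · rw [Fintype.card_fin]; omega
  have hEE (k l k' l' : Fin n) : E k l * E k' l' = -(E k l' * E k' l) := by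
    refine hV.injective ?_
    rw [map_neg, map_mul, map_mul, hE, hE, hE, hE]
    have h1 (a b c d : Λ) : a * b * (c * d) = a * (b * c) * d := by noncomm_ring
    rw [h1, h1, hV.mul_comm_neg (hg l) (hf k'), hV.mul_comm_neg (hg l') (hf k')]
    have h2 := hV.mul_comm_neg (hg l) (hg l')
    have h3 : f k * -(f k' * g l) * g l' = -(f k * f k' * (g l * g l')) := by noncomm_ring
    rw [h3, h2]
    noncomm_ring
  have hadj := adjugate_mul_of_sum_pow_mem I E B hEE hIn hpow i j
  have hpowB := pow_card_sub_one_of_trace_pow_eq_zero B (hV.trace_pow_eq_zero hA hB)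
  rw [← neg_one_smul Z B, adjugate_smul] at hpowB
  have hfin : (B ^ (n - 1)) i j * ∏ k, E k k ∈ I := by
    rw [Fintype.card_fin] at hpowB
    rw [hpowB, Matrix.smul_apply, smul_eq_mul, mul_assoc]
    exact I.mul_mem_left _ hadj
  rw [hI, Algebra.smul_def, Algebra.commutes, mul_comm, map_mul, ← List.prod_ofFn, map_list_prod,
    List.map_ofFn] at hfin
  rw [mul_assoc, ← map_pow_eq hB, map_apply, ← hfin]
  simp only [Function.comp_def, hE]

end IsOddSubmodule

end OddElements

section Grassmann

open ExteriorAlgebra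

variable {M : Type*} [AddCommGroup M] [Module ℂ M]

theorem ι_mul_ι_mul_comm (x y : M) (a : ExteriorAlgebra ℂ M) :
    a * (ι ℂ x * ι ℂ y) = ι ℂ x * ι ℂ y * a := by
  induction a using ExteriorAlgebra.induction with
  | algebraMap r => exact Algebra.commutes _ _
  | ι z =>
    have h (u v : M) : ι ℂ u * ι ℂ v = -(ι ℂ v * ι ℂ u) :=
      eq_neg_of_add_eq_zero_left (ι_add_mul_swap u v)
    rw [← mul_assoc, h z x, neg_mul, mul_assoc, h z y, mul_neg, neg_neg, mul_assoc]
  | mul a b ha hb => rw [mul_assoc, hb, ← mul_assoc, ha, mul_assoc]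
  | add a b ha hb => rw [add_mul, ha, hb, mul_add]

instance isAddTorsionFree_exteriorAlgebra : IsAddTorsionFree (ExteriorAlgebra ℂ M) :=
  .of_isTorsionFree ℂ _

instance isAddTorsionFree_center : IsAddTorsionFree (Subring.center (ExteriorAlgebra ℂ M)) :=
  Subtype.val_injective.isAddTorsionFree
    (Subring.center (ExteriorAlgebra ℂ M)).subtype.toAddMonoidHom

/-- The odd elements spanned by the generators over the centre of the exterior algebra. -/
def oddSpan (M : Type*) [AddCommGroup M] [Module ℂ M] :
    Submodule (Subring.center (ExteriorAlgebra ℂ M)) (ExteriorAlgebra ℂ M) :=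
  Submodule.span _ (Set.range (ι ℂ))

theorem ι_mem_oddSpan (x : M) : ι ℂ x ∈ oddSpan M :=
  Submodule.subset_span ⟨x, rfl⟩

theorem isOddSubmodule_oddSpan : IsOddSubmodule (oddSpan M) where
  mul_self v hv := by
    have h (u v) (hu : u ∈ oddSpan M) (hv : v ∈ oddSpan M) : u * v = -(v * u) := by
      induction hu, hv using Submodule.span_induction₂ with
      | mem_mem x y hx hy =>
        obtain ⟨x, rfl⟩ := hx
        obtain ⟨y, rfl⟩ := hy
        exact eq_neg_of_add_eq_zero_left (ι_add_mul_swap x y)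
      | zero_left => simp
      | zero_right => simp
      | add_left x y z _ _ _ h1 h2 => rw [add_mul, mul_add, h1, h2, neg_add]
      | add_right x y z _ _ _ h1 h2 => rw [add_mul, mul_add, h1, h2, neg_add]
      | smul_left r x y _ _ h => rw [smul_mul_assoc, mul_smul_comm, h, smul_neg]
      | smul_right r x y _ _ h => rw [smul_mul_assoc, mul_smul_comm, h, smul_neg]
    exact self_eq_neg.mp (h v v hv hv)
  mul_mem u hu v hv := by
    induction hu, hv using Submodule.span_induction₂ with
    | mem_mem x y hx hy =>
      obtain ⟨x, rfl⟩ := hx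
      obtain ⟨y, rfl⟩ := hy
      exact ⟨⟨ι ℂ x * ι ℂ y, Subring.mem_center_iff.2 (ι_mul_ι_mul_comm x y)⟩, rfl⟩
    | zero_left => exact ⟨0, by simp⟩
    | zero_right => exact ⟨0, by simp⟩
    | add_left x y z _ _ _ h1 h2 =>
      obtain ⟨a, ha⟩ := h1
      obtain ⟨b, hb⟩ := h2
      exact ⟨a + b, by rw [map_add, ha, hb, add_mul]⟩
    | add_right x y z _ _ _ h1 h2 =>
      obtain ⟨a, ha⟩ := h1
      obtain ⟨b, hb⟩ := h2
      exact ⟨a + b, by rw [map_add, ha, hb, mul_add]⟩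
    | smul_left r x y _ _ h =>
      obtain ⟨a, ha⟩ := h
      exact ⟨r * a, by rw [map_mul, ha, ← Algebra.smul_def, smul_mul_assoc]⟩
    | smul_right r x y _ _ h =>
      obtain ⟨a, ha⟩ := h
      exact ⟨r * a, by rw [map_mul, ha, ← Algebra.smul_def, mul_smul_comm]⟩
  injective := Subtype.val_injective

theorem ofFn_ι_single_prod_ne_zero (p : ℕ) :
    (List.ofFn fun i : Fin p => ι ℂ (Pi.single (i : ℕ) 1 : ℕ → ℂ)).prod ≠ 0 := by
  intro h
  let F := (Pi.basisFun ℂ (Fin p)).det.compLinearMap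
    (LinearMap.funLeft ℂ ℂ (Fin.val : Fin p → ℕ))
  have h1 := liftAlternating_apply_ιMulti (Function.update 0 p F)
    fun i : Fin p => (Pi.single (i : ℕ) 1 : ℕ → ℂ)
  rw [ιMulti_apply, h, map_zero, Function.update_self] at h1
  have h2 : (fun i : Fin p => LinearMap.funLeft ℂ ℂ (Fin.val : Fin p → ℕ) (Pi.single (i : ℕ) 1)) =
      Pi.basisFun ℂ (Fin p) := by
    funext i j
    simp [LinearMap.funLeft_apply, Pi.single_apply, Fin.ext_iff]
  have h3 : F (fun i : Fin p => (Pi.single (i : ℕ) 1 : ℕ → ℂ)) = 1 := by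
    rw [AlternatingMap.compLinearMap_apply, h2, Module.Basis.det_self]
  exact zero_ne_one (h1.trans h3)

variable {κ : Type*} [Fintype κ] [DecidableEq κ] {N : ℕ}

/-- The standard polynomial evaluated at a tuple of matrices. -/
def standardSum (A : Fin N → Matrix κ κ ℂ) : Matrix κ κ ℂ :=
  ∑ σ : Equiv.Perm (Fin N), (Equiv.Perm.sign σ : ℤ) • (List.ofFn fun t => A (σ t)).prod

/-- The generic combination of a tuple of matrices with odd coefficients. -/
noncomputable def oddMatrix (A : Fin N → Matrix κ κ ℂ) (v : Fin N → M) :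
    Matrix κ κ (ExteriorAlgebra ℂ M) :=
  ∑ s, (A s).map (· • ι ℂ (v s))

theorem ofFn_map_smul_prod {p : ℕ} (A : Fin p → Matrix κ κ ℂ) (E : Fin p → ExteriorAlgebra ℂ M) :
    (List.ofFn fun t => (A t).map (· • E t)).prod =
      (List.ofFn A).prod.map (· • (List.ofFn E).prod) := by
  induction p with
  | zero => ext i j; by_cases h : i = j <;> simp [one_apply, h]
  | succ p ih =>
    simp only [List.ofFn_succ, List.prod_cons, ih]
    ext i j
    simp only [mul_apply, map_apply, smul_mul_smul_comm, Finset.sum_smul]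

theorem oddMatrix_pow (A : Fin N → Matrix κ κ ℂ) (v : Fin N → M) :
    oddMatrix A v ^ N = (standardSum A).map (· • (List.ofFn fun s => ι ℂ (v s)).prod) := by
  have h1 := (MultilinearMap.mkPiAlgebraFin ℂ N (Matrix κ κ (ExteriorAlgebra ℂ M))).map_sum
    fun _ s => (A s).map (· • ι ℂ (v s))
  simp only [MultilinearMap.mkPiAlgebraFin_apply, List.ofFn_const, List.prod_replicate] at h1
  rw [oddMatrix, h1]
  simp only [ofFn_map_smul_prod]
  have h2 (r : Fin N → Fin N) : (List.ofFn fun s => ι ℂ (v (r s))).prod = ιMulti ℂ N (v ∘ r) :=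
    (ιMulti_apply _).symm
  ext i j
  rw [Matrix.sum_apply, map_apply, standardSum, Matrix.sum_apply, Finset.sum_smul]
  symm
  refine Finset.sum_of_injOn (fun σ : Equiv.Perm (Fin N) => ⇑σ)
    (fun _ _ _ _ h => Equiv.coe_fn_injective h) (fun _ _ => Finset.mem_coe.2 (Finset.mem_univ _))
    (fun r _ hr => ?_) (fun σ _ => ?_)
  · rw [map_apply, h2, AlternatingMap.map_eq_zero_of_not_injective, smul_zero]
    intro h
    exact hr ⟨Equiv.ofBijective r (Finite.injective_iff_bijective.1 h.of_comp), by simp, rfl⟩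
  · rw [map_apply, h2 σ, AlternatingMap.map_perm, Matrix.smul_apply, ιMulti_apply, smul_assoc,
      Units.smul_def, smul_comm]

omit [Fintype κ] [DecidableEq κ] in
theorem oddMatrix_mem (A : Fin N → Matrix κ κ ℂ) (v : Fin N → M) (i j : κ) :
    oddMatrix A v i j ∈ oddSpan M := by
  rw [oddMatrix, Matrix.sum_apply]
  refine Submodule.sum_mem _ fun s _ => ?_
  rw [map_apply, ← map_smul]
  exact ι_mem_oddSpan _

omit [Fintype κ] [DecidableEq κ] in
theorem transpose_oddMatrix {A : Fin N → Matrix κ κ ℂ} (hA : ∀ s, (A s)ᵀ = -A s)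
    (v : Fin N → M) : (oddMatrix A v)ᵀ = -oddMatrix A v := by
  rw [oddMatrix, transpose_sum, ← Finset.sum_neg_distrib]
  refine Finset.sum_congr rfl fun s _ => ?_
  rw [← transpose_map, hA]
  ext i j
  simp

theorem standardSum_eq_zero_of_even {n m : ℕ} (hn : n = 2 * (m + 1)) (hN : N = 2 * (n - 1))
    {A : Fin N → Matrix (Fin n) (Fin n) ℂ} (hA : ∀ s, (A s)ᵀ = -A s) : standardSum A = 0 := by
  let x (j : ℕ) : ExteriorAlgebra ℂ (ℕ → ℂ) := ι ℂ (Pi.single j 1)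
  let v (s : Fin N) : ℕ → ℂ := Pi.single (1 + n * 2 + s) 1
  have hx (j : ℕ) : x j ∈ oddSpan (ℕ → ℂ) := ι_mem_oddSpan _
  ext i j
  have h := isOddSubmodule_oddSpan.mul_prod_mul_pow_eq_zero hn (oddMatrix_mem A v)
    (transpose_oddMatrix hA v) (hx 0) (f := fun k => x (1 + k * 2))
    (g := fun k => x (1 + k * 2 + 1)) (fun _ => hx _) (fun _ => hx _) i j
  rw [← hN, oddMatrix_pow, map_apply, mul_smul_comm, smul_eq_zero] at h
  refine h.resolve_right fun h0 => ofFn_ι_single_prod_ne_zero (1 + n * 2 + N) ?_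
  rw [← h0, List.ofFn_add, List.ofFn_add, List.prod_append, List.prod_append, List.ofFn_mul,
    List.prod_flatten, List.map_ofFn]
  simp [x, v, Function.comp_def, List.ofFn_succ, add_assoc]

theorem standardSum_submatrix {ν : Type*} [Fintype ν] [DecidableEq ν] (A : Fin N → Matrix κ κ ℂ)
    (e : ν ≃ κ) :
    standardSum (fun s => (A s).submatrix e e) = (standardSum A).submatrix e e := by
  change _ = reindexAlgEquiv ℂ ℂ e.symm (standardSum A)
  simp only [standardSum, map_sum, map_zsmul, map_list_prod, List.map_ofFn]
  rfl

theorem standardSum_eq_zero_of_even_card {m : ℕ} (hκ : Fintype.card κ = 2 * (m + 1))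
    (hN : N = 2 * (Fintype.card κ - 1)) {A : Fin N → Matrix κ κ ℂ} (hA : ∀ s, (A s)ᵀ = -A s) :
    standardSum A = 0 := by
  have e := Fintype.equivFin κ
  have h := standardSum_eq_zero_of_even hκ hN (A := fun s => (A s).submatrix e.symm e.symm)
    fun s => by rw [transpose_submatrix, hA]; rfl
  rw [standardSum_submatrix] at h
  ext i j
  simpa using congrFun (congrFun h (e i)) (e j)

theorem fromBlocks_zero_pow_succ {Λ ν : Type*} [Ring Λ] [Fintype ν] [DecidableEq ν]
    (a : Matrix κ κ Λ) (u : Matrix κ ν Λ) (w : Matrix ν κ Λ) (h : u * w = 0)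
    (k : ℕ) :
    ∃ c d, fromBlocks a u w 0 ^ (k + 1) = fromBlocks (a ^ (k + 1)) (a ^ k * u) c d := by
  induction k with
  | zero => exact ⟨w, 0, by simp⟩
  | succ k ih =>
    obtain ⟨c, d, hcd⟩ := ih
    refine ⟨c * a + d * w, c * u, ?_⟩
    rw [pow_succ, hcd, fromBlocks_multiply, Matrix.mul_assoc (a ^ k), h, ← pow_succ]
    simp

/-- For odd size `n`, the standard polynomial of degree `2 * n - 1` vanishes on skew-symmetric
matrices. -/
theorem standardSum_eq_zero_of_odd_card {m : ℕ} (hκ : Fintype.card κ = 2 * m + 1)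
    (hN : N + 1 = 2 * Fintype.card κ) {A : Fin N → Matrix κ κ ℂ} (hA : ∀ s, (A s)ᵀ = -A s) :
    standardSum A = 0 := by
  suffices h : ∀ w : Matrix κ Unit ℂ, standardSum A * w = 0 by
    ext i j
    have h1 := congrFun (congrFun (h (Matrix.of fun k _ => if k = j then 1 else 0)) i) ()
    simpa [mul_apply] using h1
  intro w
  let C : Fin (N + 1) → Matrix (κ ⊕ Unit) (κ ⊕ Unit) ℂ :=
    Fin.snoc (fun s => fromBlocks (A s) 0 0 0) (fromBlocks 0 w (-wᵀ) 0)
  let v (s : Fin (N + 1)) : ℕ → ℂ := Pi.single (s : ℕ) 1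
  have hC (s : Fin (N + 1)) : (C s)ᵀ = -C s := by
    induction s using Fin.lastCases with
    | last => simp [C, fromBlocks_transpose, fromBlocks_neg]
    | cast s => simp [C, fromBlocks_transpose, fromBlocks_neg, hA]
  have hY : oddMatrix C v = fromBlocks (oddMatrix A fun s => v s.castSucc)
      (w.map (· • ι ℂ (v (Fin.last N)))) ((-wᵀ).map (· • ι ℂ (v (Fin.last N)))) 0 := by
    ext i j
    rw [oddMatrix, Fin.sum_univ_castSucc]
    rcases i with i | i <;> rcases j with j | j <;>
      simp [C, oddMatrix, Matrix.sum_apply]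
  have h0 : oddMatrix C v ^ (N + 1) = 0 := by
    rw [oddMatrix_pow, standardSum_eq_zero_of_even_card (m := m) (by simp [hκ]; ring)
      (by simp [hN]) hC]
    ext i j
    simp
  obtain ⟨c, d, hcd⟩ := fromBlocks_zero_pow_succ (oddMatrix A fun s => v s.castSucc)
    (w.map (· • ι ℂ (v (Fin.last N)))) ((-wᵀ).map (· • ι ℂ (v (Fin.last N))))
    (by ext i j; simp [mul_apply]) N
  rw [← hY, h0, ← fromBlocks_zero, fromBlocks_inj] at hcd
  ext i j
  have h1 := congrFun (congrFun hcd.2.1 i) j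
  rw [oddMatrix_pow, mul_apply] at h1
  simp only [map_apply, smul_mul_smul_comm, ← Finset.sum_smul, ← mul_apply, Matrix.zero_apply] at h1
  refine (smul_eq_zero.1 h1.symm).resolve_right fun h2 => ofFn_ι_single_prod_ne_zero (N + 1) ?_
  rw [← h2, List.ofFn_succ', List.concat_eq_append, List.prod_append, List.prod_singleton]

theorem add_mul_pow_succ_of_anticommute {R : Type*} [Ring R] {a x h : R} (ha : h * a = -(a * h))
    (hx : h * x = x * h) (hh : h * h = 0) (k : ℕ) :
    (a + x * h) ^ (k + 1) = a ^ (k + 1) +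
      (∑ p ∈ Finset.HasAntidiagonal.antidiagonal k,
        (-1 : ℤ) ^ p.2 • (a ^ p.1 * x * a ^ p.2)) * h := by
  induction k with
  | zero => simp
  | succ k ih =>
    have h1 (y : R) : y * h * (a + x * h) = -(y * a * h) := by
      rw [mul_add, mul_assoc, ha, mul_assoc, ← mul_assoc h x, hx, mul_assoc x, hh, mul_zero,
        mul_zero, add_zero, mul_neg, mul_assoc]
    rw [pow_succ, ih, add_mul, h1, Finset.Nat.sum_antidiagonal_succ', mul_add, ← pow_succ, add_mul,
      Finset.sum_mul, add_assoc]
    congr 2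
    · simp [mul_assoc]
    · rw [← neg_mul, ← Finset.sum_neg_distrib]
      congr 1
      refine Finset.sum_congr rfl fun p _ => ?_
      rw [pow_succ (-1 : ℤ), mul_neg_one, neg_smul, smul_mul_assoc, pow_succ a p.2, mul_assoc]

theorem sum_range_neg_one_pow_half (r : ℕ) :
    ∑ i ∈ Finset.range (4 * r + 1), (-1 : ℤ) ^ (i / 2) = 1 := by
  induction r with
  | zero => simp
  | succ r ih =>
    rw [show 4 * (r + 1) + 1 = 4 * r + 1 + 1 + 1 + 1 + 1 by ring, Finset.sum_range_succ,
      Finset.sum_range_succ, Finset.sum_range_succ, Finset.sum_range_succ, ih,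
      show (4 * r + 1) / 2 = 2 * r by omega, show (4 * r + 1 + 1) / 2 = 2 * r + 1 by omega,
      show (4 * r + 1 + 1 + 1) / 2 = 2 * r + 1 by omega,
      show (4 * r + 1 + 1 + 1 + 1) / 2 = 2 * (r + 1) by omega]
    simp [pow_succ, pow_mul]

omit [Fintype κ] [DecidableEq κ] in
theorem oddMatrix_snoc (A : Fin N → Matrix κ κ ℂ) (v : Fin (N + 1) → M) (X : Matrix κ κ ℂ) :
    oddMatrix (Fin.snoc A X : Fin (N + 1) → Matrix κ κ ℂ) v =
      oddMatrix A (fun s => v s.castSucc) + X.map (· • ι ℂ (v (Fin.last N))) := by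
  rw [oddMatrix, Fin.sum_univ_castSucc]
  simp [oddMatrix]

omit [Fintype κ] [DecidableEq κ] in
theorem ι_mul_oddMatrix_apply (A : Fin N → Matrix κ κ ℂ) (v : Fin N → M) (x : M) (i j : κ) :
    ι ℂ x * oddMatrix A v i j = -(oddMatrix A v i j * ι ℂ x) :=
  isOddSubmodule_oddSpan.mul_comm_neg (ι_mem_oddSpan x) (oddMatrix_mem A v i j)

theorem sum_mul_map_mul_apply_mul_eq_zero {m : ℕ} (hκ : Fintype.card κ = 2 * m + 1)
    (hN : N = 4 * m) {A : Fin N → Matrix κ κ ℂ} (hA : ∀ s, (A s)ᵀ = -A s)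
    (v : Fin (N + 1) → M) {X : Matrix κ κ ℂ} (hX : Xᵀ = -X) (i j : κ) :
    (∑ p ∈ Finset.range (N + 1), (-1 : ℤ) ^ (N - p) •
      (oddMatrix A (fun s => v s.castSucc) ^ p * X.map (algebraMap ℂ (ExteriorAlgebra ℂ M)) *
        oddMatrix A (fun s => v s.castSucc) ^ (N - p))) i j * ι ℂ (v (Fin.last N)) = 0 := by
  have hpow (X : Matrix κ κ ℂ) (hX : Xᵀ = -X) :
      (oddMatrix A (fun s => v s.castSucc) + X.map (· • ι ℂ (v (Fin.last N)))) ^ (N + 1) = 0 := by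
    rw [← oddMatrix_snoc, oddMatrix_pow, standardSum_eq_zero_of_odd_card hκ (by omega)]
    · ext i j
      simp
    · intro s
      induction s using Fin.lastCases with
      | last => simpa using hX
      | cast s => simpa using hA s
  set a := oddMatrix A (fun s => v s.castSucc) with ha
  let h : Matrix κ κ (ExteriorAlgebra ℂ M) := diagonal fun _ => ι ℂ (v (Fin.last N))
  have hXh (X : Matrix κ κ ℂ) :
      X.map (· • ι ℂ (v (Fin.last N))) = X.map (algebraMap ℂ (ExteriorAlgebra ℂ M)) * h := by
    ext i j
    rw [mul_diagonal, map_apply, map_apply, Algebra.smul_def]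
  have h0 : a ^ (N + 1) = 0 := by
    have h1 := hpow 0 (by simp)
    rwa [hXh, Matrix.map_zero _ (map_zero _), zero_mul, add_zero] at h1
  have h1 := hpow X hX
  rw [hXh, add_mul_pow_succ_of_anticommute, h0, zero_add,
    Finset.Nat.sum_antidiagonal_eq_sum_range_succ_mk] at h1
  · have h2 := congrFun (congrFun h1 i) j
    rwa [mul_diagonal] at h2
  · ext i j
    rw [diagonal_mul, Matrix.neg_apply, mul_diagonal]
    exact ι_mul_oddMatrix_apply A _ _ i j
  · ext i j
    rw [diagonal_mul, mul_diagonal, map_apply]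
    exact (Algebra.commutes _ _).symm
  · rw [diagonal_mul_diagonal]
    ext i j
    simp [diagonal_apply]

theorem sum_trace_smul_sub_apply_mul_eq_zero {m : ℕ} (hκ : Fintype.card κ = 2 * m + 1)
    (hN : N = 4 * m) {A : Fin N → Matrix κ κ ℂ} (hA : ∀ s, (A s)ᵀ = -A s)
    (v : Fin (N + 1) → M) {a : Matrix κ κ (ExteriorAlgebra ℂ M)}
    (ha : a = oddMatrix A (fun s => v s.castSucc)) (i j : κ) :
    (∑ p ∈ Finset.range (N + 1), (-1 : ℤ) ^ (N - p) •
      (trace (a ^ p) • a ^ (N - p) - (a ^ p)ᵀ * a ^ (N - p))) i j * ι ℂ (v (Fin.last N)) = 0 := by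
  have h1 (k : κ) := sum_mul_map_mul_apply_mul_eq_zero hκ hN hA v
    (X := Matrix.single k i 1 - Matrix.single i k 1) (by simp) k j
  simp only [← ha] at h1
  have h2 := Finset.sum_eq_zero fun k (_ : k ∈ Finset.univ) => h1 k
  rw [← Finset.sum_mul] at h2
  rw [← h2]
  congr 1
  simp only [Matrix.sum_apply, Matrix.smul_apply]
  rw [Finset.sum_comm]
  refine Finset.sum_congr rfl fun p _ => ?_
  rw [← Finset.smul_sum]
  congr 1
  have h3 (P Q : Matrix κ κ (ExteriorAlgebra ℂ M)) (k : κ) :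
      (P * (Matrix.single k i 1 - Matrix.single i k 1 : Matrix κ κ ℂ).map
        (algebraMap ℂ (ExteriorAlgebra ℂ M)) * Q) k j = P k k * Q i j - P k i * Q k j := by
    have h4 : (Matrix.single k i 1 - Matrix.single i k 1 : Matrix κ κ ℂ).map
        (algebraMap ℂ (ExteriorAlgebra ℂ M)) = Matrix.single k i 1 - Matrix.single i k 1 := by
      rw [Matrix.map_sub _ (map_sub _)]
      simp
    rw [h4, mul_sub, sub_mul, Matrix.sub_apply]
    simp [mul_apply, Matrix.single_apply, ite_and, Finset.sum_ite_eq]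
  simp only [h3, Finset.sum_sub_distrib, Matrix.sub_apply, Matrix.smul_apply, smul_eq_mul, trace,
    diag_apply, Finset.sum_mul, mul_apply, transpose_apply]

theorem standardSum_eq_zero_of_odd {m : ℕ} (hm : 0 < m) (hκ : Fintype.card κ = 2 * m + 1)
    (hN : N = 4 * m) {A : Fin N → Matrix κ κ ℂ} (hA : ∀ s, (A s)ᵀ = -A s) :
    standardSum A = 0 := by
  let v (s : Fin (N + 1)) : ℕ → ℂ := Pi.single (s : ℕ) 1
  obtain ⟨a, ha⟩ : ∃ a, a = oddMatrix A (fun s => v s.castSucc) := ⟨_, rfl⟩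
  have hV := isOddSubmodule_oddSpan (M := ℕ → ℂ)
  have ha' (i j : κ) : a i j ∈ oddSpan (ℕ → ℂ) := ha ▸ oddMatrix_mem _ _ i j
  have haT : aᵀ = -a := ha ▸ transpose_oddMatrix hA _
  have haN : (a ^ N)ᵀ = a ^ N := by
    rw [hN, show 4 * m = 2 * (2 * m) by ring, hV.transpose_pow_even ha' haT]
    simp
  set T : ℕ → Matrix κ κ (ExteriorAlgebra ℂ (ℕ → ℂ)) := fun p => (-1 : ℤ) ^ (N - p) •
      (trace (a ^ p) • a ^ (N - p) - (a ^ p)ᵀ * a ^ (N - p)) with hT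
  have hterm (p : ℕ) (hp : p ∈ Finset.range (N + 1)) : T p + (T p)ᵀ =
      (if p = 0 then (2 * Fintype.card κ : ℤ) • a ^ N else 0) -
        (-1 : ℤ) ^ (p / 2) • (2 : ℤ) • a ^ N := by
    have hpN : p ≤ N := Nat.lt_succ_iff.1 (Finset.mem_range.1 hp)
    have hprod : a ^ p * a ^ (N - p) = a ^ N := by rw [← pow_add]; congr 1; omega
    have key (s : ℤ) (hs : (a ^ p)ᵀ = s • a ^ p) : T p + (T p)ᵀ = (-1 : ℤ) ^ (N - p) •
        (trace (a ^ p) • (a ^ (N - p) + (a ^ (N - p))ᵀ) - s • (2 : ℤ) • a ^ N) := by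
      simp only [hT, hs, transpose_smul, transpose_sub, smul_mul_assoc, hprod, haN]
      rw [← smul_add, smul_add (trace (a ^ p)), two_smul, smul_add s]
      abel_nf
    obtain ⟨q, hq⟩ : ∃ q, p = 4 * q ∨ p = 4 * q + 1 ∨ p = 4 * q + 2 ∨ p = 4 * q + 3 :=
      ⟨p / 4, by omega⟩
    rcases hq with hq | hq | hq | hq
    · have hs : (a ^ p)ᵀ = (1 : ℤ) • a ^ p := by
        rw [hq, show 4 * q = 2 * (2 * q) by ring, hV.transpose_pow_even ha' haT]
        simp
      rw [key 1 hs, show N - p = 2 * (2 * (m - q)) by omega, show p / 2 = 2 * q by omega,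
        pow_mul (-1 : ℤ), pow_mul (-1 : ℤ), neg_one_sq, one_pow, one_pow, one_smul, one_smul]
      congr 1
      split_ifs with hp0
      · obtain rfl : q = 0 := by omega
        rw [hp0, pow_zero, trace_one, show 2 * (2 * (m - 0)) = N by omega, haN, ← two_smul ℤ,
          Nat.cast_smul_eq_nsmul, ← natCast_zsmul, smul_smul, mul_comm]
      · rw [hq, show 4 * q = 2 * (2 * q) by ring, hV.trace_pow_even ha' _ (by omega), zero_smul]
    · have hs : (a ^ p)ᵀ = (-1 : ℤ) • a ^ p := by
        rw [hq, show 4 * q + 1 = 2 * (2 * q) + 1 by ring, hV.transpose_pow_odd ha' haT]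
        simp [pow_succ]
      have htr : trace (a ^ p) = 0 := by
        refine self_eq_neg.mp ?_
        conv_lhs => rw [← trace_transpose, hs, neg_one_smul, trace_neg]
      rw [key _ hs, htr, zero_smul, if_neg (by omega), show p / 2 = 2 * q by omega,
        show N - p = 2 * (2 * (m - q) - 1) + 1 by omega, pow_succ, pow_mul, pow_mul]
      simp
    · have hs : (a ^ p)ᵀ = (-1 : ℤ) • a ^ p := by
        rw [hq, show 4 * q + 2 = 2 * (2 * q + 1) by ring, hV.transpose_pow_even ha' haT]
        simp [pow_succ]
      rw [key _ hs, hq, show 4 * q + 2 = 2 * (2 * q + 1) by ring,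
        hV.trace_pow_even ha' _ (by omega), zero_smul, if_neg (by omega),
        show 2 * (2 * q + 1) / 2 = 2 * q + 1 by omega,
        show N - 2 * (2 * q + 1) = 2 * (2 * (m - q) - 1) by omega, pow_succ, pow_mul, pow_mul]
      simp
    · have hs : (a ^ p)ᵀ = (1 : ℤ) • a ^ p := by
        rw [hq, show 4 * q + 3 = 2 * (2 * q + 1) + 1 by ring, hV.transpose_pow_odd ha' haT]
        simp [pow_succ]
      have hskew : a ^ (N - p) + (a ^ (N - p))ᵀ = 0 := by
        rw [show N - p = 2 * (2 * (m - q - 1)) + 1 by omega, hV.transpose_pow_odd ha' haT]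
        simp [pow_succ]
      rw [key _ hs, hskew, smul_zero, if_neg (by omega), show p / 2 = 2 * q + 1 by omega,
        show N - p = 2 * (2 * (m - q - 1)) + 1 by omega, pow_succ, pow_succ, pow_mul, pow_mul]
      simp
  have hsum : (∑ p ∈ Finset.range (N + 1), T p) + (∑ p ∈ Finset.range (N + 1), T p)ᵀ =
      (4 * m : ℕ) • a ^ N := by
    rw [transpose_sum, ← Finset.sum_add_distrib, Finset.sum_congr rfl hterm,
      Finset.sum_sub_distrib, Finset.sum_ite_eq' _ _ fun _ => _, ← Finset.sum_smul, hN,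
      sum_range_neg_one_pow_half, hκ, one_smul, if_pos (by simp), ← sub_smul,
      ← natCast_zsmul]
    congr 1
    push_cast
    ring
  ext i j
  have h1 := sum_trace_smul_sub_apply_mul_eq_zero hκ hN hA v ha i j
  have h2 := sum_trace_smul_sub_apply_mul_eq_zero hκ hN hA v ha j i
  have h3 : ((4 * m : ℕ) • a ^ N) i j * ι ℂ (v (Fin.last N)) = 0 := by
    rw [← hsum, Matrix.add_apply, transpose_apply, add_mul, h1, h2, add_zero]
  rw [Matrix.smul_apply, smul_mul_assoc, nsmul_eq_zero_iff_right (by omega), ha, oddMatrix_pow,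
    map_apply, smul_mul_assoc] at h3
  refine (smul_eq_zero.1 h3).resolve_right fun h4 => ofFn_ι_single_prod_ne_zero (N + 1) ?_
  rw [← h4, List.ofFn_succ', List.concat_eq_append, List.prod_append, List.prod_singleton]

end Grassmann

theorem kostant_rowen (n : ℕ) (hn : 2 ≤ n)
    (A : Fin (2 * n - 2) → Matrix (Fin n) (Fin n) ℂ)
    (hA : ∀ i, (A i)ᵀ = -A i) :
    ∑ σ : Equiv.Perm (Fin (2 * n - 2)),
      (Equiv.Perm.sign σ : ℤ) • (List.ofFn fun t => A (σ t)).prod = 0 := by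
  change standardSum A = 0
  rcases Nat.even_or_odd' n with ⟨m, h | h⟩
  · exact standardSum_eq_zero_of_even (m := m - 1) (by omega) (by omega) hA
  · exact standardSum_eq_zero_of_odd (m := m) (by omega) (by simpa using h) (by omega) hA
end

section
/- (Giambruno's theorem) For any n complex alternating n×n matrices A_1, …, A_n (A_iᵀ = −A_i) and any n complex symmetric n×n matrices B_1, …, B_n (B_jᵀ = B_j), the double alternating sum Σ_{σ ∈ S_n} Σ_{τ ∈ S_n} sgn(σ) sgn(τ) · A_{σ(1)} B_{τ(1)} A_{σ(2)} B_{τ(2)} ⋯ A_{σ(n)} B_{τ(n)} equals the zero matrix, where the product is the ordered matrix product. -/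
open Matrix

/-- The Jacobi formula for the derivative of a determinant. -/
theorem derivative_det {m R : Type*} [Fintype m] [DecidableEq m] [CommRing R]
    (N : Matrix m m (Polynomial R)) :
    Polynomial.derivative N.det = (N.adjugate * N.map Polynomial.derivative).trace := by
  have h : ∀ i, (N.adjugate * N.map Polynomial.derivative) i i =
      (N.updateCol i fun j => Polynomial.derivative (N j i)).det := by
    intro i
    rw [← Matrix.cramer_apply, Matrix.cramer_eq_adjugate_mulVec]
    rfl
  simp only [Matrix.trace, Matrix.diag_apply, h, Matrix.det_apply, map_sum]
  rw [Finset.sum_comm]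
  refine Finset.sum_congr rfl fun σ _ => ?_
  rw [Units.smul_def, map_zsmul, Polynomial.derivative_prod_finset, Finset.smul_sum]
  refine Finset.sum_congr rfl fun i _ => ?_
  rw [← Finset.mul_prod_erase Finset.univ _ (Finset.mem_univ i), Matrix.updateCol_self,
    mul_comm, Units.smul_def]
  congr 2
  refine Finset.prod_congr rfl fun j hj => ?_
  rw [Matrix.updateCol_ne (Finset.ne_of_mem_erase hj)]

theorem X_mul_derivative_charpoly {m R : Type*} [Fintype m] [DecidableEq m] [CommRing R]
    (M : Matrix m m R) (hM : ∀ k, (M ^ (k + 1)).trace = 0) :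
    Polynomial.X * Polynomial.derivative M.charpoly =
      (Fintype.card m : Polynomial R) * M.charpoly := by
  set L : Matrix m m (Polynomial R) := Polynomial.C.mapMatrix M with hL
  have hadj : (Polynomial.X : Polynomial R) • M.charmatrix.adjugate - L * M.charmatrix.adjugate =
      M.charpoly • 1 := by
    rw [Matrix.charpoly, ← Matrix.mul_adjugate]
    nth_rewrite 3 [Matrix.charmatrix]
    rw [sub_mul, Matrix.scalar_apply, ← Matrix.smul_eq_diagonal_mul]
  have hder : Polynomial.derivative M.charpoly = M.charmatrix.adjugate.trace := by
    have : M.charmatrix.map Polynomial.derivative = 1 := by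
      ext i j : 1
      by_cases h : i = j
      · subst h; simp
      · simp [h]
    rw [Matrix.charpoly, derivative_det, this, mul_one]
  have hrec : ∀ k, (L ^ (k + 1) * M.charmatrix.adjugate).trace =
      Polynomial.X ^ k * (L * M.charmatrix.adjugate).trace := by
    intro k
    induction k with
    | zero => simp
    | succ k ih =>
      have h := congrArg (fun N => (L ^ (k + 1) * N).trace) hadj
      have h0 : (L ^ (k + 1)).trace = 0 := by
        rw [hL, ← map_pow, RingHom.mapMatrix_apply, ← AddMonoidHom.map_trace, hM, map_zero]
      simp only [mul_sub, Matrix.mul_smul, ← mul_assoc, Matrix.trace_sub, Matrix.trace_smul, mul_one,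
        smul_eq_mul, h0, mul_zero, ← pow_succ, ih] at h
      rw [← sub_eq_zero.mp h]; ring
  have hzero : (L * M.charmatrix.adjugate).trace = 0 := by
    have h := congrArg (fun N => (L * (Polynomial.C.mapMatrix N) * M.charmatrix.adjugate).trace)
      M.aeval_self_charpoly
    simp only [Polynomial.aeval_eq_sum_range, map_sum, map_zero, mul_zero, zero_mul,
      Matrix.trace_zero, Finset.mul_sum, Finset.sum_mul, Matrix.trace_sum] at h
    rw [← (M.charpoly_monic).mul_right_eq_zero_iff, ← h]
    nth_rewrite 1 [M.charpoly.as_sum_range_C_mul_X_pow]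
    rw [Finset.sum_mul]
    refine Finset.sum_congr rfl fun k _ => ?_
    have : Polynomial.C.mapMatrix (M.charpoly.coeff k • M ^ k) =
        Polynomial.C (M.charpoly.coeff k) • L ^ k := by
      rw [hL, ← map_pow]
      ext1 i j
      simp
    rw [this, mul_assoc, ← hrec, Matrix.mul_smul, Matrix.smul_mul, ← pow_succ',
      Matrix.trace_smul, smul_eq_mul]
  have h := congrArg Matrix.trace hadj
  rw [Matrix.trace_sub, hzero, Matrix.trace_smul, Matrix.trace_smul, ← hder, Matrix.trace_one,
    sub_zero, smul_eq_mul, smul_eq_mul] at h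
  rw [h, mul_comm]

/-- A square matrix all of whose positive powers are traceless is nilpotent. -/
theorem pow_card_eq_zero_of_trace {m R : Type*} [Fintype m] [DecidableEq m] [CommRing R]
    [Algebra ℚ R] (M : Matrix m m R) (hM : ∀ k, (M ^ (k + 1)).trace = 0) :
    M ^ Fintype.card m = 0 := by
  have h : M.charpoly = Polynomial.X ^ Fintype.card m := by
    nontriviality R
    ext j
    rw [Polynomial.coeff_X_pow]
    split_ifs with hj
    · rw [hj, ← M.charpoly_natDegree_eq_dim]
      exact M.charpoly_monic
    · have h := congrArg (fun p => p.coeff j) (X_mul_derivative_charpoly M hM)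
      have h' : ((j : ℚ) - Fintype.card m) • M.charpoly.coeff j = 0 := by
        rw [← Polynomial.C_eq_natCast] at h
        simp only [Polynomial.coeff_C_mul] at h
        rw [sub_smul, Nat.cast_smul_eq_nsmul, Nat.cast_smul_eq_nsmul, nsmul_eq_mul,
          nsmul_eq_mul, ← h, sub_eq_zero]
        cases j with
        | zero => simp
        | succ j => rw [Polynomial.coeff_X_mul, Polynomial.coeff_derivative]; push_cast; ring
      exact (smul_eq_zero_iff_right (sub_ne_zero.mpr (by exact_mod_cast hj))).mp h'
  simpa [h] using M.aeval_self_charpoly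

theorem trace_pow_eq_zero_of_anticommute {m R E : Type*} [Fintype m] [DecidableEq m] [CommRing R]
    [Algebra ℚ R] [Ring E] (f : R →+* E) (hinj : Function.Injective f)
    (hf : ∀ r x, f r * x = x * f r)
    {X Y : Matrix m m E} (hX : Xᵀ = -X) (hY : Yᵀ = Y)
    (hXY : ∀ i j k l, X i j * Y k l = -(Y k l * X i j))
    {M : Matrix m m R} (hM : M.map f = X * Y) (k : ℕ) :
    (M ^ (k + 1)).trace = 0 := by
  have hpow (N : Matrix m m R) (k : ℕ) :
      (N ^ k).map f = (N.map f) ^ k :=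
    map_pow f.mapMatrix N k
  have htrace (N : Matrix m m R) :
      f N.trace = (N.map f).trace :=
    AddMonoidHom.map_trace f N
  have hMt : Mᵀ.map f = Y * X := by
    rw [Matrix.transpose_map, hM]
    ext i j
    simp only [Matrix.transpose_apply, Matrix.mul_apply]
    refine Finset.sum_congr rfl fun k _ => ?_
    rw [hXY, ← congrFun₂ hY i k, Matrix.transpose_apply, ← mul_neg, ← Matrix.neg_apply, ← hX,
      Matrix.transpose_apply]
  have hcycle : (X * (Y * (X * Y) ^ k)).trace = -(Y * (X * Y) ^ k * X).trace := by
    rw [← hM, ← hpow]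
    simp only [Matrix.trace, Matrix.diag_apply, Matrix.mul_apply (M := X),
      Matrix.mul_apply (N := X)]
    rw [Finset.sum_comm, ← Finset.sum_neg_distrib]
    refine Finset.sum_congr rfl fun j _ => ?_
    rw [← Finset.sum_neg_distrib]
    refine Finset.sum_congr rfl fun i _ => ?_
    simp only [Matrix.mul_apply, Matrix.map_apply, Finset.mul_sum, Finset.sum_mul,
      ← Finset.sum_neg_distrib]
    refine Finset.sum_congr rfl fun l _ => ?_
    rw [← mul_assoc, hXY, neg_mul, mul_assoc, ← hf, mul_assoc]
  have hsemi : Y * (X * Y) ^ k = (Y * X) ^ k * Y :=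
    (show SemiconjBy Y (X * Y) (Y * X) from (mul_assoc Y X Y).symm).pow_right k
  have key : (M ^ (k + 1)).trace = -(M ^ (k + 1)).trace := by
    apply hinj
    rw [map_neg]
    nth_rewrite 2 [← Matrix.trace_transpose]
    rw [Matrix.transpose_pow, htrace, htrace, hpow, hpow, hM, hMt, pow_succ', mul_assoc, hcycle,
      hsemi, mul_assoc, ← pow_succ]
  have h2 : (2 : ℚ) • (M ^ (k + 1)).trace = 0 := by
    rw [two_smul]
    nth_rewrite 1 [key]
    exact neg_add_cancel _
  exact (smul_eq_zero_iff_right two_ne_zero).mp h2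

theorem prod_ofFn_ι_mul_ι {R V : Type*} [CommRing R] [AddCommGroup V] [Module R V] {n : ℕ}
    (u : Fin n × Fin 2 → V) :
    (List.ofFn fun t => ExteriorAlgebra.ι R (u (t, 0)) * ExteriorAlgebra.ι R (u (t, 1))).prod =
      ExteriorAlgebra.ιMulti R (n * 2) (u ∘ finProdFinEquiv.symm) := by
  rw [ExteriorAlgebra.ιMulti_apply, List.ofFn_mul, List.prod_flatten, List.map_ofFn]
  congr 2
  funext t
  have h (j : Fin 2) (hj) : u (finProdFinEquiv.symm (⟨t * 2 + j, hj⟩ : Fin (n * 2))) = u (t, j) := by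
    congr 1
    rw [Equiv.symm_apply_eq]
    ext
    simp [finProdFinEquiv, mul_comm, add_comm]
  simp only [Function.comp_apply]
  rw [List.ofFn_succ, List.ofFn_succ, List.ofFn_zero, List.prod_cons, List.prod_cons, List.prod_nil,
    mul_one, Fin.succ_zero_eq_one, h 0, h 1]

theorem exists_linearMap_exteriorAlgebra_prod_eq_det (R : Type*) [CommRing R] (n : ℕ) :
    ∃ φ : ExteriorAlgebra R (Fin n × Fin 2 → R) →ₗ[R] R, ∀ u : Fin n × Fin 2 → Fin n × Fin 2 → R,
      φ (List.ofFn fun t =>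
        ExteriorAlgebra.ι R (u (t, 0)) * ExteriorAlgebra.ι R (u (t, 1))).prod =
          Matrix.det (Matrix.of u) := by
  classical
  let D : (Fin n × Fin 2 → R) [⋀^Fin (n * 2)]→ₗ[R] R :=
    Matrix.detRowAlternating.domDomCongr finProdFinEquiv
  refine ⟨ExteriorAlgebra.liftAlternating (Pi.single (n * 2) D), fun u => ?_⟩
  rw [prod_ofFn_ι_mul_ι, ExteriorAlgebra.liftAlternating_apply_ιMulti, Pi.single_eq_same]
  simp only [D, AlternatingMap.domDomCongr_apply]
  congr 1
  ext1 i
  exact congrArg u (finProdFinEquiv.symm_apply_apply i)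

theorem det_pi_single_eq_mul {R : Type*} [CommRing R] {n : ℕ} (f : Fin n × Fin 2 → Fin n) :
    Matrix.det (Matrix.of fun p : Fin n × Fin 2 =>
      (Pi.single (f p, p.2) 1 : Fin n × Fin 2 → R)) =
      Matrix.det (Matrix.of fun t => (Pi.single (f (t, 0)) 1 : Fin n → R)) *
        Matrix.det (Matrix.of fun t => (Pi.single (f (t, 1)) 1 : Fin n → R)) := by
  rw [← Fin.prod_univ_two fun j =>
    Matrix.det (Matrix.of fun t => (Pi.single (f (t, j)) 1 : Fin n → R)),
    ← Matrix.det_blockDiagonal]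
  congr 1
  ext ⟨i, j⟩ ⟨i', j'⟩
  simp only [Matrix.of_apply, Matrix.blockDiagonal_apply, Pi.single_apply, Prod.mk.injEq]
  grind

theorem det_pi_single_perm {m R : Type*} [Fintype m] [DecidableEq m] [CommRing R]
    (σ : Equiv.Perm m) :
    Matrix.det (Matrix.of fun t => (Pi.single (σ t) 1 : m → R)) = (Equiv.Perm.sign σ : ℤ) := by
  rw [← Matrix.det_permutation]
  congr 1
  ext i j
  simp [Pi.single_apply, PEquiv.toMatrix_apply, eq_comm]

theorem det_pi_single_eq_zero {m R : Type*} [Fintype m] [DecidableEq m] [CommRing R]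
    {f : m → m} (hf : ¬ Function.Injective f) :
    Matrix.det (Matrix.of fun t => (Pi.single (f t) 1 : m → R)) = 0 := by
  simp only [Function.Injective, not_forall] at hf
  obtain ⟨i, j, hij, hne⟩ := hf
  exact Matrix.det_zero_of_row_eq hne (by ext k; simp [hij])

theorem ι_mul_ι_mem_center {R V : Type*} [CommRing R] [AddCommGroup V] [Module R V] (x y : V) :
    ExteriorAlgebra.ι R x * ExteriorAlgebra.ι R y ∈
      Subalgebra.center R (ExteriorAlgebra R V) := by
  rw [Subalgebra.mem_center_iff]
  have hswap (v w : V) : ExteriorAlgebra.ι R v * ExteriorAlgebra.ι R w =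
      -(ExteriorAlgebra.ι R w * ExteriorAlgebra.ι R v) :=
    eq_neg_of_add_eq_zero_left (ExteriorAlgebra.ι_add_mul_swap v w)
  intro b
  induction b using ExteriorAlgebra.induction with
  | algebraMap r => exact Algebra.commutes _ _
  | ι v =>
    rw [← mul_assoc, hswap v x, neg_mul, mul_assoc, hswap v y, mul_neg, neg_neg, mul_assoc]
  | mul a b ha hb => rw [mul_assoc, hb, ← mul_assoc, ha, mul_assoc]
  | add a b ha hb => rw [add_mul, mul_add, ha, hb]

theorem sum_smul_map_pow {R S m κ : Type*} [Fintype m] [DecidableEq m] [Fintype κ] [CommRing R]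
    [CommRing S] [Algebra R S] (c : κ → S) (N : κ → Matrix m m R) (n : ℕ) :
    (∑ h, c h • (N h).map (algebraMap R S)) ^ n =
      ∑ r : Fin n → κ,
        (∏ t, c (r t)) • (List.ofFn fun t => N (r t)).prod.map (algebraMap R S) := by
  classical
  have h := (MultilinearMap.mkPiAlgebraFin S n (Matrix m m S)).map_sum
    fun _ h => c h • (N h).map (algebraMap R S)
  rw [MultilinearMap.mkPiAlgebraFin_apply, List.ofFn_const, List.prod_replicate] at h
  rw [h]
  refine Finset.sum_congr rfl fun r _ => ?_
  rw [MultilinearMap.map_smul_univ, MultilinearMap.mkPiAlgebraFin_apply]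
  congr 1
  have := map_list_prod (algebraMap R S).mapMatrix (List.ofFn fun t => N (r t))
  rw [List.map_ofFn] at this
  exact this.symm

theorem giambruno (n : ℕ) (hn : 0 < n)
    (A : Fin n → Matrix (Fin n) (Fin n) ℂ) (hA : ∀ i, (A i)ᵀ = -A i)
    (B : Fin n → Matrix (Fin n) (Fin n) ℂ) (hB : ∀ j, (B j)ᵀ = B j) :
    ∑ σ : Equiv.Perm (Fin n), ∑ τ : Equiv.Perm (Fin n),
      ((Equiv.Perm.sign σ * Equiv.Perm.sign τ : ℤˣ) : ℤ) •
        (List.ofFn fun t : Fin n => A (σ t) * B (τ t)).prod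
    = 0 := by
  let V := Fin n × Fin 2 → ℂ
  let E := ExteriorAlgebra ℂ V
  let Z := Subalgebra.center ℂ E
  let e (p : Fin n × Fin 2) : E := ExteriorAlgebra.ι ℂ (Pi.single p 1 : V)
  let c (h : Fin n × Fin n) : Z := ⟨e (h.1, 0) * e (h.2, 1), ι_mul_ι_mem_center _ _⟩
  let M : Matrix (Fin n) (Fin n) Z := ∑ h, c h • (A h.1 * B h.2).map (algebraMap ℂ Z)
  let X : Matrix (Fin n) (Fin n) E := .of fun p q => ∑ i, A i p q • e (i, 0)
  let Y : Matrix (Fin n) (Fin n) E := .of fun p q => ∑ i, B i p q • e (i, 1)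
  have hM : M ^ n = 0 := by
    have hXY : M.map Z.val.toRingHom = X * Y := by
      ext p q
      have hl : M.map Z.val.toRingHom p q =
          ∑ h : Fin n × Fin n, (A h.1 * B h.2) p q • (e (h.1, 0) * e (h.2, 1)) := by
        simp only [M, Matrix.map_apply, Matrix.sum_apply, map_sum]
        refine Finset.sum_congr rfl fun h _ => ?_
        rw [Matrix.smul_apply, Matrix.map_apply, smul_eq_mul, mul_comm, ← Algebra.smul_def]
        rfl
      simp only [hl, X, Y, Matrix.mul_apply, Matrix.of_apply, Finset.sum_smul]
      rw [Finset.sum_comm]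
      refine Finset.sum_congr rfl fun k _ => ?_
      rw [Fintype.sum_prod_type]
      refine Eq.trans ?_ (Finset.sum_mul_sum _ _ _ _).symm
      exact Finset.sum_congr rfl fun i _ => Finset.sum_congr rfl fun j _ =>
        (smul_mul_smul_comm _ _ _ _).symm
    have := pow_card_eq_zero_of_trace M (trace_pow_eq_zero_of_anticommute
      Z.val.toRingHom Subtype.val_injective
      (fun r x => (Subalgebra.mem_center_iff.mp r.2 x).symm) (X := X) (Y := Y) ?_ ?_ ?_ hXY)
    · simpa using this
    · ext p q
      simp only [X, Matrix.transpose_apply, Matrix.of_apply, Matrix.neg_apply]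
      rw [← Finset.sum_neg_distrib]
      refine Finset.sum_congr rfl fun i _ => ?_
      rw [← Matrix.transpose_apply (A i), hA, Matrix.neg_apply, neg_smul]
    · ext p q
      simp only [Y, Matrix.transpose_apply, Matrix.of_apply]
      refine Finset.sum_congr rfl fun i _ => ?_
      rw [← Matrix.transpose_apply (B i), hB]
    · intro i j k l
      have (M : Fin n → Matrix (Fin n) (Fin n) ℂ) (a : Fin 2) (p q : Fin n) :
          ∑ i, M i p q • e (i, a) =
            ExteriorAlgebra.ι ℂ (∑ i, M i p q • (Pi.single (i, a) 1 : V)) := by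
        simp [e]
      simp only [X, Y, Matrix.of_apply, this]
      exact eq_neg_of_add_eq_zero_left (ExteriorAlgebra.ι_add_mul_swap _ _)
  obtain ⟨φ, hφ⟩ := exists_linearMap_exteriorAlgebra_prod_eq_det ℂ n
  have hprod (r : Fin n → Fin n × Fin n) : φ (∏ t, c (r t) : Z) =
      Matrix.det (Matrix.of fun t => (Pi.single (r t).1 1 : Fin n → ℂ)) *
        Matrix.det (Matrix.of fun t => (Pi.single (r t).2 1 : Fin n → ℂ)) := by
    have h := det_pi_single_eq_mul (R := ℂ) fun p : Fin n × Fin 2 => ![(r p.1).1, (r p.1).2] p.2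
    simp only [Matrix.cons_val_zero, Matrix.cons_val_one] at h
    rw [← h, ← hφ, ← List.prod_ofFn]
    congr 1
    refine (map_list_prod Z.val _).trans ?_
    rw [List.map_ofFn]
    rfl
  have hscalar (x : Z) (a : ℂ) : φ (x • algebraMap ℂ Z a : Z) = a * φ x := by
    rw [smul_eq_mul, mul_comm, ← Algebra.smul_def]
    exact map_smul φ a (x : E)
  ext p q
  have h := congrArg (fun N => φ (N p q : Z)) hM
  simp only [M, sum_smul_map_pow, Matrix.sum_apply, Matrix.smul_apply, Matrix.map_apply,
    Matrix.zero_apply, AddSubmonoidClass.coe_finsetSum, map_sum, ZeroMemClass.coe_zero,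
    map_zero] at h
  rw [← Fintype.sum_prod_type', Matrix.sum_apply, Matrix.zero_apply, ← h]
  refine Fintype.sum_of_injective
    (fun s : Equiv.Perm (Fin n) × Equiv.Perm (Fin n) => fun t => (s.1 t, s.2 t)) ?_ _ _ ?_ ?_
  · intro s s' hs
    ext t : 2
    · exact congrArg Prod.fst (congrFun hs t)
    · exact congrArg Prod.snd (congrFun hs t)
  · intro r hr
    rw [hscalar, hprod]
    by_cases h1 : Function.Injective fun t => (r t).1
    · have h2 : ¬ Function.Injective fun t => (r t).2 := fun h2 =>
        hr ⟨(.ofBijective _ (Finite.injective_iff_bijective.mp h1),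
          .ofBijective _ (Finite.injective_iff_bijective.mp h2)), rfl⟩
      rw [det_pi_single_eq_zero h2, mul_zero, mul_zero]
    · rw [det_pi_single_eq_zero h1, zero_mul, mul_zero]
  · rintro ⟨σ, τ⟩
    rw [hscalar, hprod, det_pi_single_perm, det_pi_single_perm, Matrix.smul_apply, zsmul_eq_mul,
      Units.val_mul, Int.cast_mul, mul_comm]
end
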